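/- Let n ≥ 1, p ∈ (0,∞), and let 𝒫_{1/2} denote the set of projections in M_{2n}(ℂ) of normalized trace 1/2. Let φ : 𝒫_{1/2} → 𝒫_{1/2} be a surjective L^p-isometry. Then there exists a unitary W ∈ M_{2n}(ℂ) such that one of the following four forms holds for every P ∈ 𝒫_{1/2}: φ(P) = W P Wᴴ, φ(P) = W Pᵀ Wᴴ, φ(P) = I − W P Wᴴ, or φ(P) = I − W Pᵀ Wᴴ. (These forms encode φ(P) = φ'(P) or φ(P) = I − φ'(P) with φ' a *-automorphism or *-anti-automorphism of M_{2n}(ℂ).) -/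

import Mathlib

open Matrix
open scoped ComplexOrder

/-- The normalized trace `L^p`-(quasi-)norm `(τ(|A|^p))^{1/p}` of a complex matrix,
computed via the eigenvalues of `Aᴴ * A`: the eigenvalues of `|A|^p` are the
`(p/2)`-th powers of those of `Aᴴ * A`, and the trace of a Hermitian matrix is the
sum of its eigenvalues. -/
noncomputable def lpnorm {m : Type*} [Fintype m] [DecidableEq m] (p : ℝ)
    (A : Matrix m m ℂ) : ℝ :=
  ((∑ i, ((Matrix.posSemidef_conjTranspose_mul_self A).isHermitian.eigenvalues i) ^ (p / 2)) /
      (Fintype.card m : ℝ)) ^ (1 / p)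

/-- The `ℓ² → ℓ²` operator norm of a complex matrix. -/
noncomputable def l2opNorm {m : Type*} [Fintype m] [DecidableEq m]
    (A : Matrix m m ℂ) : ℝ :=
  ‖Matrix.toEuclideanCLM (𝕜 := ℂ) A‖

/-!
Through `s = 2P - 1` the projections of normalized trace `1/2` become the symmetries of trace `0`,
and distances are multiplied by `2`. Symmetries at operator distance less than `2` are joined by a
geodesic `t ↦ exp (i t h) s` with `h` anticommuting with `s`, and each symmetry `c` acts by the
reflection `x ↦ c x c`.

*Isometries preserve the trace form.* As in Väisälä's proof of the Mazur–Ulam theorem, an isometry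
`g` that fixes both `a` and `c a c`, with `c` close to `a`, fixes `c`: its commutator with the
reflection at `c` fixes the same two points and displaces `c` by at least `3 ^ (p / 2)` times as
much in `Tr |·|^p`, while displacements are bounded. Hence isometries commute with reflections at
nearby points, and therefore carry geodesics to geodesics. If the direction `h` has eigenvalues
`a i`, then `Tr |exp (i t h) s - s|^p = 2^p ∑ |sin (t a i / 2)|^p` is preserved for all `t`. The
Mellin transform in `t` recovers `∑ |a i|^z` for `0 < z < p`, hence by analyticity in `z` all the
even moments, hence `∑ cos (a i)`, which is the trace of the product of the endpoints. The pairs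
joined by such a geodesic are dense.

*Rigidity.* An isometry preserving the trace form extends to a linear map `Φ`. If `E` is a rank-one
projection and `x i` are the eigenvalues of `Φ E`, then `∑ x i = ∑ (x i) ^ 2 = 1`, and pairing with
symmetries gives `∑ ε i * x i ≤ 1` for all balanced signs `ε`, that is `∑ |x i - c| ≤ 1` for a
median `c` of the `x i`. This forces `Φ E` or `(1 / n) • 1 - Φ E` to be idempotent, and by
connectedness the same alternative holds for all `E`. Thus `Φ` or its complement
`X ↦ (Tr X / n) • 1 - Φ X` is a Jordan homomorphism, so by Herstein's argument it is multiplicative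
or antimultiplicative, which makes it a unitary conjugation, possibly composed with the transpose.
-/

namespace GrassmannIsometry

section MellinTransform

open MeasureTheory Set

lemma integrableOn_abs_sin_rpow_mul_rpow {p z : ℝ} (hz : 0 < z) (hzp : z < p) (a : ℝ) :
    IntegrableOn (fun t => |Real.sin (t * a)| ^ p * t ^ (-z - 1)) (Ioi 0) := by
  have hp : 0 < p := hz.trans hzp
  have hm : Measurable (fun t : ℝ => |Real.sin (t * a)| ^ p * t ^ (-z - 1)) := by fun_prop
  rw [← Ioc_union_Ioi_eq_Ioi zero_le_one]
  refine IntegrableOn.union ?_ ?_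
  · have hint : IntegrableOn (fun t : ℝ => |a| ^ p * t ^ (p - z - 1)) (Ioc 0 1) := by
      have := (intervalIntegral.intervalIntegrable_rpow' (a := 0) (b := 1)
        (r := p - z - 1) (by linarith)).const_mul (|a| ^ p)
      exact (intervalIntegrable_iff_integrableOn_Ioc_of_le zero_le_one).mp this
    refine Integrable.mono' hint hm.aestronglyMeasurable ?_
    refine (ae_restrict_iff' measurableSet_Ioc).mpr (Filter.Eventually.of_forall fun t ht => ?_)
    have ht0 : 0 < t := ht.1
    rw [Real.norm_of_nonneg (by positivity)]
    have hsin : |Real.sin (t * a)| ^ p ≤ (t * |a|) ^ p := by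
      refine Real.rpow_le_rpow (abs_nonneg _) ?_ hp.le
      calc _ ≤ |t * a| := Real.abs_sin_le_abs
        _ = _ := by rw [abs_mul, abs_of_pos ht0]
    calc _ ≤ (t * |a|) ^ p * t ^ (-z - 1) := by gcongr
      _ = |a| ^ p * (t ^ p * t ^ (-z - 1)) := by
        rw [Real.mul_rpow ht0.le (abs_nonneg _)]
        ring
      _ = _ := by
        rw [← Real.rpow_add ht0]
        ring_nf
  · refine Integrable.mono' (integrableOn_Ioi_rpow_of_lt (a := -z - 1) (by linarith) one_pos)
      hm.aestronglyMeasurable ?_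
    refine (ae_restrict_iff' measurableSet_Ioi).mpr (Filter.Eventually.of_forall fun t ht => ?_)
    have ht0 : (0 : ℝ) < t := one_pos.trans ht
    rw [Real.norm_of_nonneg (by positivity)]
    calc _ ≤ (1 : ℝ) ^ p * t ^ (-z - 1) := by
          gcongr
          exact Real.abs_sin_le_one _
      _ = _ := by simp

lemma integral_abs_sin_rpow_mul_rpow {p z : ℝ} (hz : 0 < z) (hzp : z < p) (a : ℝ) :
    ∫ t in Ioi (0 : ℝ), |Real.sin (t * a)| ^ p * t ^ (-z - 1)
      = |a| ^ z * ∫ t in Ioi (0 : ℝ), |Real.sin t| ^ p * t ^ (-z - 1) := by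
  have hp : 0 < p := hz.trans hzp
  rcases eq_or_ne a 0 with rfl | ha
  · simp [Real.zero_rpow hz.ne', Real.zero_rpow hp.ne']
  have ha' : 0 < |a| := abs_pos.mpr ha
  have hsubst := integral_comp_mul_left_Ioi (fun t : ℝ => |Real.sin t| ^ p * t ^ (-z - 1)) 0 ha'
  rw [mul_zero, smul_eq_mul] at hsubst
  have hhom : ∫ t in Ioi (0 : ℝ), |Real.sin (|a| * t)| ^ p * (|a| * t) ^ (-z - 1)
      = |a| ^ (-z - 1) * ∫ t in Ioi (0 : ℝ), |Real.sin (t * a)| ^ p * t ^ (-z - 1) := by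
    rw [← integral_const_mul]
    refine setIntegral_congr_fun measurableSet_Ioi fun t ht => ?_
    have ht0 : (0 : ℝ) < t := ht
    have hsin : |Real.sin (|a| * t)| = |Real.sin (t * a)| := by
      rcases abs_choice a with h | h <;> rw [h]
      · rw [mul_comm]
      · rw [neg_mul, Real.sin_neg, abs_neg, mul_comm]
    simp only [hsin]
    rw [Real.mul_rpow ha'.le ht0.le]
    ring
  have hpow : |a| ^ (-z - 1) = |a|⁻¹ * (|a| ^ z)⁻¹ := by
    rw [Real.rpow_sub ha', Real.rpow_neg ha'.le, Real.rpow_one]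
    field_simp
  rw [hhom, hpow, mul_assoc] at hsubst
  rw [← mul_left_cancel₀ (inv_ne_zero ha'.ne') hsubst, ← mul_assoc,
    mul_inv_cancel₀ (Real.rpow_pos_of_pos ha' z).ne', one_mul]

lemma integral_abs_sin_rpow_mul_rpow_pos {p z : ℝ} (hz : 0 < z) (hzp : z < p) :
    0 < ∫ t in Ioi (0 : ℝ), |Real.sin t| ^ p * t ^ (-z - 1) := by
  have hi := integrableOn_abs_sin_rpow_mul_rpow hz hzp 1
  simp only [mul_one] at hi
  rw [setIntegral_pos_iff_support_of_nonneg_ae _ hi]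
  · refine lt_of_lt_of_le (b := volume (Ioo (0 : ℝ) 1)) (by simp) (measure_mono fun t ht => ?_)
    refine ⟨?_, ht.1⟩
    have hsin : 0 < Real.sin t := Real.sin_pos_of_pos_of_lt_pi ht.1
      (by linarith [ht.2, Real.pi_gt_three])
    have ht0 : 0 < t := ht.1
    simp only [Function.mem_support]
    positivity
  · refine (ae_restrict_iff' measurableSet_Ioi).mpr (Filter.Eventually.of_forall fun t ht => ?_)
    have ht0 : (0 : ℝ) < t := ht
    simp only [Pi.zero_apply]
    positivity

variable {m : Type*} [Fintype m]

lemma sum_abs_rpow_eq_of_sum_abs_sin_rpow_eq {p : ℝ} {a b : m → ℝ}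
    (h : ∀ t : ℝ, 0 < t → ∑ i, |Real.sin (t * a i)| ^ p = ∑ i, |Real.sin (t * b i)| ^ p)
    {z : ℝ} (hz : 0 < z) (hzp : z < p) : ∑ i, |a i| ^ z = ∑ i, |b i| ^ z := by
  have hmellin : ∀ c : m → ℝ, ∫ t in Ioi (0 : ℝ), (∑ i, |Real.sin (t * c i)| ^ p) * t ^ (-z - 1)
      = (∑ i, |c i| ^ z) * ∫ t in Ioi (0 : ℝ), |Real.sin t| ^ p * t ^ (-z - 1) := fun c => by
    simp only [Finset.sum_mul]
    rw [integral_finsetSum _ fun i _ => integrableOn_abs_sin_rpow_mul_rpow hz hzp (c i)]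
    exact Finset.sum_congr rfl fun i _ => integral_abs_sin_rpow_mul_rpow hz hzp (c i)
  refine mul_right_cancel₀ (integral_abs_sin_rpow_mul_rpow_pos hz hzp).ne' ?_
  rw [← hmellin, ← hmellin]
  exact setIntegral_congr_fun measurableSet_Ioi fun t ht => by simp only [h t ht]

lemma sum_abs_pow_eq_of_sum_abs_rpow_eq {p : ℝ} (hp : 0 < p) {a b : m → ℝ}
    (h : ∀ z : ℝ, 0 < z → z < p → ∑ i, |a i| ^ z = ∑ i, |b i| ^ z) {k : ℕ} (hk : k ≠ 0) :
    ∑ i, |a i| ^ k = ∑ i, |b i| ^ k := by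
  classical
  let f : (m → ℝ) → ℝ → ℝ := fun c z => ∑ i, if c i = 0 then 0 else Real.exp (z * Real.log |c i|)
  have hf : ∀ c z, z ≠ 0 → f c z = ∑ i, |c i| ^ z := fun c z hz =>
    Finset.sum_congr rfl fun i _ => by
      by_cases hc : c i = 0
      · simp [hc, Real.zero_rpow hz]
      · simp [hc, Real.rpow_def_of_pos (abs_pos.mpr hc), mul_comm]
  have han : ∀ c, AnalyticOnNhd ℝ (f c) univ := fun c => by
    refine Finset.analyticOnNhd_fun_sum _ fun i _ => ?_
    by_cases hc : c i = 0
    · simp only [hc, if_true]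
      exact analyticOnNhd_const
    · simp only [hc, if_false]
      exact (analyticOnNhd_id.mul analyticOnNhd_const).rexp
  have heq : f a = f b := by
    refine (han a).eq_of_eventuallyEq (han b) (z₀ := p / 2) ?_
    filter_upwards [Ioo_mem_nhds (half_pos hp) (half_lt_self hp)] with z hz
    rw [hf _ _ hz.1.ne', hf _ _ hz.1.ne', h z hz.1 hz.2]
  have hk' : (k : ℝ) ≠ 0 := by exact_mod_cast hk
  have := congrFun heq k
  rw [hf _ _ hk', hf _ _ hk'] at this
  simpa using this

lemma sum_cos_eq_of_sum_abs_sin_rpow_eq {p : ℝ} (hp : 0 < p) {a b : m → ℝ}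
    (h : ∀ t : ℝ, 0 < t → ∑ i, |Real.sin (t * a i)| ^ p = ∑ i, |Real.sin (t * b i)| ^ p) :
    ∑ i, Real.cos (2 * a i) = ∑ i, Real.cos (2 * b i) := by
  have hseries : ∀ c : m → ℝ, HasSum (fun k : ℕ => (-1) ^ k * 2 ^ (2 * k) / (2 * k).factorial *
      ∑ i, |c i| ^ (2 * k)) (∑ i, Real.cos (2 * c i)) := fun c => by
    have := hasSum_sum (s := Finset.univ) fun i (_ : i ∈ Finset.univ) => Real.hasSum_cos (2 * c i)
    convert this using 2 with k
    rw [Finset.mul_sum]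
    refine Finset.sum_congr rfl fun i _ => ?_
    rw [mul_pow, pow_mul |c i|, sq_abs, ← pow_mul]
    ring
  refine (hseries a).unique ?_
  convert hseries b using 2 with k
  congr 1
  rcases Nat.eq_zero_or_pos k with rfl | hk
  · simp
  · exact sum_abs_pow_eq_of_sum_abs_rpow_eq hp
      (fun z hz hzp => sum_abs_rpow_eq_of_sum_abs_sin_rpow_eq h hz hzp) (by omega)

end MellinTransform

section Diagonalization

variable {m : Type*} [Fintype m] [DecidableEq m]

/-- The star-algebra embedding `d ↦ V * diagonal d * Vᴴ` of `m → ℂ` in the matrices, for a unitary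
`V`; it is how diagonalizations are expressed below. -/
noncomputable def conjDiag (V : unitaryGroup m ℂ) : (m → ℂ) →⋆ₐ[ℂ] Matrix m m ℂ where
  __ := (Unitary.conjStarAlgAut ℂ (Matrix m m ℂ) V).toAlgEquiv.toAlgHom.comp (diagonalAlgHom ℂ)
  map_star' d := by
    have h := map_star (Unitary.conjStarAlgAut ℂ (Matrix m m ℂ) V) (diagonal d)
    rw [star_eq_conjTranspose, diagonal_conjTranspose] at h
    exact h

lemma conjDiag_apply (V : unitaryGroup m ℂ) (d : m → ℂ) :
    conjDiag V d = V * diagonal d * (V : Matrix m m ℂ)ᴴ := rfl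

lemma exists_conjDiag {A : Matrix m m ℂ} (hA : A.IsHermitian) :
    ∃ (V : unitaryGroup m ℂ) (a : m → ℝ), A = conjDiag V fun i => (a i : ℂ) :=
  ⟨hA.eigenvectorUnitary, hA.eigenvalues, hA.spectral_theorem⟩

lemma trace_conjDiag (V : unitaryGroup m ℂ) (d : m → ℂ) : (conjDiag V d).trace = ∑ i, d i := by
  have hV : (V : Matrix m m ℂ)ᴴ * V = 1 := UnitaryGroup.star_mul_self V
  rw [conjDiag_apply, trace_mul_comm, ← Matrix.mul_assoc, hV, Matrix.one_mul, trace_diagonal]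

lemma charpoly_conjDiag (V : unitaryGroup m ℂ) (d : m → ℂ) :
    (conjDiag V d).charpoly = ∏ i, (Polynomial.X - Polynomial.C (d i)) := by
  have hV : (V : Matrix m m ℂ)ᴴ * V = 1 := UnitaryGroup.star_mul_self V
  rw [conjDiag_apply, charpoly_mul_comm, ← Matrix.mul_assoc, hV, Matrix.one_mul, charpoly_diagonal]

lemma sum_eigenvalues_eq {A : Matrix m m ℂ} (hA : A.IsHermitian) {V : unitaryGroup m ℂ}
    {a : m → ℝ} (h : A = conjDiag V fun i => (a i : ℂ)) (f : ℝ → ℝ) :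
    ∑ i, f (hA.eigenvalues i) = ∑ i, f (a i) := by
  have hroots : Multiset.map (fun i => (hA.eigenvalues i : ℂ)) Finset.univ.val
      = Multiset.map (fun i => (a i : ℂ)) Finset.univ.val := by
    have hchar := congrArg Polynomial.roots (h ▸ charpoly_conjDiag V fun i => (a i : ℂ))
    rw [hA.roots_charpoly_eq_eigenvalues, Polynomial.roots_prod _ _
      (Finset.prod_ne_zero_iff.mpr fun i _ => Polynomial.X_sub_C_ne_zero _)] at hchar
    simpa using hchar
  simpa using congrArg (fun s => (s.map (fun z => f z.re)).sum) hroots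

end Diagonalization

section Schatten

open scoped Matrix.Norms.L2Operator

variable {m : Type*} [Fintype m] [DecidableEq m] {p : ℝ}

lemma norm_conjDiag (V : unitaryGroup m ℂ) (d : m → ℂ) : ‖conjDiag V d‖ = ‖d‖ := by
  rw [conjDiag_apply, ← star_eq_conjTranspose, ← Unitary.coe_star, CStarRing.norm_mul_coe_unitary,
    CStarRing.norm_coe_unitary_mul, l2_opNorm_diagonal]

lemma isometry_conjDiag (V : unitaryGroup m ℂ) : Isometry (conjDiag V) :=
  AddMonoidHomClass.isometry_of_norm (conjDiag V) (norm_conjDiag V)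

lemma sq_rpow_half {x : ℝ} (hx : 0 ≤ x) (p : ℝ) : (x ^ 2) ^ (p / 2) = x ^ p := by
  rw [← Real.rpow_natCast_mul hx]
  congr 1
  push_cast
  ring

/-- The sum of the `p`-th powers of the singular values of `A`, that is `Tr |A|^p`. -/
noncomputable def schattenPow (p : ℝ) (A : Matrix m m ℂ) : ℝ :=
  ∑ i, (posSemidef_conjTranspose_mul_self A).isHermitian.eigenvalues i ^ (p / 2)

lemma schattenPow_nonneg (A : Matrix m m ℂ) : 0 ≤ schattenPow p A :=
  Finset.sum_nonneg fun i _ =>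
    Real.rpow_nonneg ((posSemidef_conjTranspose_mul_self A).eigenvalues_nonneg i) _

lemma schattenPow_eq_sum {A : Matrix m m ℂ} {V : unitaryGroup m ℂ} {a : m → ℝ}
    (h : Aᴴ * A = conjDiag V fun i => (a i : ℂ)) : schattenPow p A = ∑ i, a i ^ (p / 2) :=
  sum_eigenvalues_eq (posSemidef_conjTranspose_mul_self A).isHermitian h (fun x => x ^ (p / 2))

lemma schattenPow_congr {A B : Matrix m m ℂ} (h : Aᴴ * A = Bᴴ * B) :
    schattenPow p A = schattenPow p B := by
  obtain ⟨V, b, hb⟩ := exists_conjDiag (posSemidef_conjTranspose_mul_self B).isHermitian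
  rw [schattenPow_eq_sum (h.trans hb), schattenPow_eq_sum hb]

lemma schattenPow_smul (c : ℂ) (A : Matrix m m ℂ) :
    schattenPow p (c • A) = ‖c‖ ^ p * schattenPow p A := by
  have hA := posSemidef_conjTranspose_mul_self A
  have hspec : Aᴴ * A = conjDiag hA.isHermitian.eigenvectorUnitary
      fun i => (hA.isHermitian.eigenvalues i : ℂ) := hA.isHermitian.spectral_theorem
  have hdiag : (c • A)ᴴ * (c • A) = conjDiag hA.isHermitian.eigenvectorUnitary
      fun i => ((‖c‖ ^ 2 * hA.isHermitian.eigenvalues i : ℝ) : ℂ) := by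
    rw [conjTranspose_smul, smul_mul_smul_comm]
    refine (congrArg _ hspec).trans ?_
    rw [← map_smul]
    congr 1 with i
    simp [Complex.conj_mul']
  rw [schattenPow_eq_sum hdiag, schattenPow, Finset.mul_sum]
  refine Finset.sum_congr rfl fun i _ => ?_
  rw [Real.mul_rpow (sq_nonneg _) (hA.eigenvalues_nonneg i), sq_rpow_half (norm_nonneg c)]

lemma schattenPow_conjDiag (V : unitaryGroup m ℂ) (d : m → ℂ) :
    schattenPow p (conjDiag V d) = ∑ i, ‖d i‖ ^ p := by
  have h : (conjDiag V d)ᴴ * conjDiag V d = conjDiag V fun i => ((‖d i‖ ^ 2 : ℝ) : ℂ) := by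
    rw [← star_eq_conjTranspose, ← map_star, ← map_mul]
    congr 1 with i
    simp [Complex.conj_mul']
  rw [schattenPow_eq_sum h]
  exact Finset.sum_congr rfl fun i _ => sq_rpow_half (norm_nonneg _) p

lemma schattenPow_unitary_mul (U : unitaryGroup m ℂ) (A : Matrix m m ℂ) :
    schattenPow p ((U : Matrix m m ℂ) * A) = schattenPow p A := by
  have hU : (U : Matrix m m ℂ)ᴴ * U = 1 := UnitaryGroup.star_mul_self U
  refine schattenPow_congr ?_
  rw [conjTranspose_mul, Matrix.mul_assoc, ← Matrix.mul_assoc _ (U : Matrix m m ℂ), hU,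
    Matrix.one_mul]

lemma schattenPow_mul_unitary (A : Matrix m m ℂ) (U : unitaryGroup m ℂ) :
    schattenPow p (A * (U : Matrix m m ℂ)) = schattenPow p A := by
  obtain ⟨V, a, ha⟩ := exists_conjDiag (posSemidef_conjTranspose_mul_self A).isHermitian
  rw [schattenPow_eq_sum ha]
  refine schattenPow_eq_sum (V := star U * V) ?_
  rw [conjTranspose_mul, Matrix.mul_assoc, ← Matrix.mul_assoc Aᴴ, ha]
  simp only [conjDiag_apply, UnitaryGroup.mul_val, star_eq_conjTranspose,
    conjTranspose_mul, conjTranspose_conjTranspose, Matrix.mul_assoc, Unitary.coe_star]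

lemma schattenPow_sub_comm (A B : Matrix m m ℂ) :
    schattenPow p (A - B) = schattenPow p (B - A) :=
  schattenPow_congr (by rw [← neg_sub B A, conjTranspose_neg, neg_mul_neg])

lemma norm_sq_eq_norm_eigenvalues (A : Matrix m m ℂ) :
    ‖A‖ ^ 2 = ‖fun i => ((posSemidef_conjTranspose_mul_self A).isHermitian.eigenvalues i : ℂ)‖ := by
  have h := (posSemidef_conjTranspose_mul_self A).isHermitian
  rw [← norm_conjDiag h.eigenvectorUnitary, sq, ← CStarRing.norm_star_mul_self]
  exact congrArg norm h.spectral_theorem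

lemma norm_rpow_le_schattenPow (hp : 0 < p) (A : Matrix m m ℂ) : ‖A‖ ^ p ≤ schattenPow p A := by
  have hnn := (posSemidef_conjTranspose_mul_self A).eigenvalues_nonneg
  have hs : 0 ≤ schattenPow p A := schattenPow_nonneg A
  have hsq : ‖A‖ ^ 2 ≤ schattenPow p A ^ (2 / p) := by
    rw [norm_sq_eq_norm_eigenvalues, pi_norm_le_iff_of_nonneg (Real.rpow_nonneg hs _)]
    intro i
    rw [Complex.norm_of_nonneg (hnn i), ← inv_div,
      Real.le_rpow_inv_iff_of_pos (hnn i) hs (by positivity)]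
    exact Finset.single_le_sum (fun j _ => Real.rpow_nonneg (hnn j) _) (Finset.mem_univ i)
  calc ‖A‖ ^ p = (‖A‖ ^ 2) ^ (p / 2) := (sq_rpow_half (norm_nonneg A) p).symm
    _ ≤ (schattenPow p A ^ (2 / p)) ^ (p / 2) := by gcongr
    _ = schattenPow p A := by rw [← Real.rpow_mul hs]; field_simp; simp

lemma norm_le_of_schattenPow_le (hp : 0 < p) {A : Matrix m m ℂ} {δ : ℝ} (hδ : 0 ≤ δ)
    (h : schattenPow p A ≤ δ ^ p) : ‖A‖ ≤ δ :=
  (Real.rpow_le_rpow_iff (norm_nonneg A) hδ hp).mp ((norm_rpow_le_schattenPow hp A).trans h)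

lemma schattenPow_le_card_mul_norm_rpow (hp : 0 < p) (A : Matrix m m ℂ) :
    schattenPow p A ≤ Fintype.card m * ‖A‖ ^ p := by
  have hnn := (posSemidef_conjTranspose_mul_self A).eigenvalues_nonneg
  have hA := (posSemidef_conjTranspose_mul_self A).isHermitian
  rw [← nsmul_eq_mul]
  refine Finset.sum_le_card_nsmul _ _ _ fun i _ => ?_
  calc _ ≤ (‖A‖ ^ 2) ^ (p / 2) := by
        refine Real.rpow_le_rpow (hnn i) ?_ (by positivity)
        rw [norm_sq_eq_norm_eigenvalues, ← Complex.norm_of_nonneg (hnn i)]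
        exact norm_le_pi_norm (fun j => (hA.eigenvalues j : ℂ)) i
    _ = ‖A‖ ^ p := sq_rpow_half (norm_nonneg A) p

lemma schattenPow_eq_zero_iff (hp : 0 < p) {A : Matrix m m ℂ} : schattenPow p A = 0 ↔ A = 0 := by
  refine ⟨fun h => ?_, ?_⟩
  · exact norm_le_zero_iff.mp <| norm_le_of_schattenPow_le hp le_rfl <|
      h.le.trans_eq (Real.zero_rpow hp.ne').symm
  · rintro rfl
    refine le_antisymm ((schattenPow_le_card_mul_norm_rpow hp 0).trans_eq ?_) (schattenPow_nonneg 0)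
    rw [norm_zero, Real.zero_rpow hp.ne', mul_zero]

end Schatten

section Symmetries

open selfAdjoint Unitary

variable {A : Type*}

/-- Symmetries of a `*`-algebra: self-adjoint unitary elements. -/
structure IsSymmetry [Mul A] [One A] [Star A] (s : A) : Prop where
  star_eq : star s = s
  mul_self : s * s = 1

section Ring

variable [Ring A] [StarRing A] {s t : A}

lemma IsSymmetry.mem_unitary (hs : IsSymmetry s) : s ∈ unitary A := by
  rw [Unitary.mem_iff, hs.star_eq, hs.mul_self]
  exact ⟨rfl, rfl⟩

lemma IsSymmetry.neg (hs : IsSymmetry s) : IsSymmetry (-s) where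
  star_eq := by rw [star_neg, hs.star_eq]
  mul_self := by rw [neg_mul_neg, hs.mul_self]

lemma IsSymmetry.isStarProjection [Algebra ℂ A] [StarModule ℂ A] (hs : IsSymmetry s) :
    IsStarProjection ((2⁻¹ : ℂ) • (1 + s)) where
  isSelfAdjoint := by rw [IsSelfAdjoint, star_smul, star_add, star_one, hs.star_eq]; simp
  isIdempotentElem := by
    have h : (1 + s) * (1 + s) = (2 : ℂ) • (1 + s) := by
      rw [two_smul, add_mul, mul_add s, hs.mul_self, mul_one, one_mul, add_comm s 1]
    rw [IsIdempotentElem, smul_mul_smul_comm, h, smul_smul]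
    norm_num

lemma isSymmetry_two_smul_sub_one [Algebra ℂ A] {P : A} (hP : IsStarProjection P) :
    IsSymmetry ((2 : ℂ) • P - 1) := by
  have hsa : star (2 * P - 1) = 2 * P - 1 := by
    rw [star_sub, star_one, star_mul, hP.isSelfAdjoint.star_eq, star_ofNat, mul_two, two_mul]
  rw [two_smul, ← two_mul]
  refine ⟨hsa, ?_⟩
  have h := Unitary.star_mul_self_of_mem hP.two_mul_sub_one_mem_unitary
  rwa [hsa] at h

lemma IsSymmetry.conj (hs : IsSymmetry s) (ht : IsSymmetry t) : IsSymmetry (s * t * s) where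
  star_eq := by rw [star_mul, star_mul, hs.star_eq, ht.star_eq, mul_assoc]
  mul_self := by
    rw [show s * t * s * (s * t * s) = s * t * (s * s) * t * s by simp only [mul_assoc],
      hs.mul_self, mul_one, mul_assoc s t t, ht.mul_self, mul_one, hs.mul_self]

lemma IsSymmetry.conj_unitary (hs : IsSymmetry s) (u : unitary A) :
    IsSymmetry (u * s * star (u : A)) where
  star_eq := by rw [star_mul, star_mul, star_star, hs.star_eq, mul_assoc]
  mul_self := by
    rw [show u * s * star (u : A) * (u * s * star (u : A)) = u * s * (star (u : A) * u) * s *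
      star (u : A) by simp only [mul_assoc], Unitary.coe_star_mul_self, mul_one, mul_assoc (u : A),
      hs.mul_self, mul_one, Unitary.mul_star_self_of_mem u.2]

lemma IsSymmetry.conj_conj (hs : IsSymmetry s) (x : A) : s * (s * x * s) * s = x := by
  rw [show s * (s * x * s) * s = s * s * x * (s * s) by simp only [mul_assoc],
    hs.mul_self, one_mul, mul_one]

lemma IsSymmetry.sub_mul_self (hs : IsSymmetry s) (ht : IsSymmetry t) :
    (s - t) * (s - t) = 2 - (s * t + t * s) := by
  calc (s - t) * (s - t) = s * s + t * t - (s * t + t * s) := by noncomm_ring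
    _ = 2 - (s * t + t * s) := by rw [hs.mul_self, ht.mul_self, one_add_one_eq_two]

lemma IsSymmetry.sub_conj_mul_self (hs : IsSymmetry s) (ht : IsSymmetry t) :
    (s - t * s * t) * (s - t * s * t)
      = 4 * ((s - t) * (s - t)) - (s - t) * (s - t) * ((s - t) * (s - t)) := by
  have hs2 := hs.mul_self
  have ht2 := ht.mul_self
  have hsq : (s * t + t * s) * (s * t + t * s) = 2 + (s * (t * s * t) + t * s * t * s) := by
    calc _ = s * (t * t) * s + t * (s * s) * t + (s * (t * s * t) + t * s * t * s) := by
          noncomm_ring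
      _ = _ := by rw [hs2, ht2, mul_one, mul_one, hs2, ht2, one_add_one_eq_two]
  rw [hs.sub_mul_self (ht.conj hs), hs.sub_mul_self ht]
  linear_combination (norm := noncomm_ring) hsq

end Ring

section CStarAlgebra

variable [CStarAlgebra A] {s t : A} {h : selfAdjoint A}

lemma IsSymmetry.eq_of_commute (hs : IsSymmetry s) (ht : IsSymmetry t) (hst : Commute s t)
    (hlt : ‖s - t‖ < 2) : s = t := by
  have hsa : star (s - t) = s - t := by rw [star_sub, hs.star_eq, ht.star_eq]
  have hsq : star ((s - t) * (s - t)) * ((s - t) * (s - t)) = (4 : ℝ) • ((s - t) * (s - t)) := by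
    have := hs.sub_conj_mul_self ht
    rw [← hst.eq, mul_assoc s t t, ht.mul_self, mul_one, sub_self, zero_mul] at this
    rw [star_mul, hsa, ← sub_eq_zero.mp this.symm, Algebra.smul_def, map_ofNat]
  have hnorm : ‖s - t‖ ^ 2 * (‖s - t‖ ^ 2 - 4) = 0 := by
    have := congrArg norm hsq
    rw [CStarRing.norm_star_mul_self, norm_smul, Real.norm_of_nonneg (by norm_num)] at this
    have hn : ‖(s - t) * (s - t)‖ = ‖s - t‖ * ‖s - t‖ := by
      nth_rw 1 [← hsa, CStarRing.norm_star_mul_self]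
    rw [hn] at this
    linear_combination this
  have hne : ‖s - t‖ ^ 2 - 4 ≠ 0 := by nlinarith [norm_nonneg (s - t)]
  simpa [hne, sub_eq_zero] using hnorm

lemma eq_of_expUnitary_eq {k : selfAdjoint A} (hh : ‖h‖ < Real.pi) (hk : ‖k‖ < Real.pi)
    (heq : expUnitary h = expUnitary k) : h = k := by
  rw [← argSelfAdjoint_expUnitary hh, heq, argSelfAdjoint_expUnitary hk]

lemma norm_argSelfAdjoint_lt_pi {u : unitary A} (hu : ‖(u - 1 : A)‖ < 2) :
    ‖argSelfAdjoint u‖ < Real.pi := by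
  refine (norm_argSelfAdjoint_le_pi u).lt_of_ne fun hpi => ?_
  have := two_mul_one_sub_cos_norm_argSelfAdjoint hu
  rw [hpi, Real.cos_pi] at this
  nlinarith [norm_nonneg (u - 1 : A)]

lemma norm_lt_pi_div_two_of_norm_expUnitary_sub_one_le (hh : ‖h‖ < Real.pi)
    (hle : ‖(expUnitary h - 1 : A)‖ ≤ 1) : ‖h‖ < Real.pi / 2 := by
  have hsq := norm_sq_expUnitary_sub_one hh.le
  have hcos : 0 < Real.cos ‖h‖ := by nlinarith [norm_nonneg (expUnitary h - 1 : A)]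
  by_contra! hge
  exact hcos.not_ge (Real.cos_nonpos_of_pi_div_two_le_of_le hge (by linarith [Real.pi_pos]))

lemma expUnitary_add_smul (h : selfAdjoint A) (a b : ℝ) :
    expUnitary ((a + b) • h) = expUnitary (a • h) * expUnitary (b • h) := by
  rw [add_smul, Commute.expUnitary_add (((Commute.refl (h : A)).smul_left a).smul_right b)]

lemma star_expUnitary (h : selfAdjoint A) : star (expUnitary h) = expUnitary (-h) := by
  rw [Unitary.star_eq_inv, inv_eq_iff_mul_eq_one,
    ← Commute.expUnitary_add ((Commute.refl (h : A)).neg_right), add_neg_cancel, expUnitary_zero]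

lemma semiconjBy_expUnitary {k : selfAdjoint A} (hs : SemiconjBy s (h : A) k) :
    SemiconjBy s (expUnitary h : A) (expUnitary k) := by
  let +nondep : NormedAlgebra ℚ A := .restrictScalars ℚ ℂ A
  simp only [expUnitary_coe]
  exact (hs.smul_right Complex.I).exp_right

/-- The geodesic `t ↦ exp (i t h) s` of the space of symmetries, for `h` anticommuting with `s`. -/
noncomputable def geodesic (h : selfAdjoint A) (s : A) (t : ℝ) : A := expUnitary (t • h) * s

lemma geodesic_zero (h : selfAdjoint A) (s : A) : geodesic h s 0 = s := by simp [geodesic]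

lemma geodesic_smul (h : selfAdjoint A) (s : A) (r t : ℝ) :
    geodesic (r • h) s t = geodesic h s (t * r) := by rw [geodesic, geodesic, mul_smul]

lemma continuous_geodesic (h : selfAdjoint A) (s : A) : Continuous (geodesic h s) := by
  have : Continuous fun t : ℝ => expUnitary (t • h) := continuous_expUnitary.comp (by fun_prop)
  exact (continuous_subtype_val.comp this).mul continuous_const

lemma geodesic_sub_geodesic (h : selfAdjoint A) (s : A) (t u : ℝ) :
    geodesic h s t - geodesic h s u
      = (expUnitary (u • h) : A) * ((expUnitary ((t - u) • h) - 1) * s) := by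
  have := expUnitary_add_smul h u (t - u)
  rw [add_sub_cancel] at this
  rw [geodesic, geodesic, this, Submonoid.coe_mul]
  noncomm_ring

section Anticommute

variable (hs : IsSymmetry s) (hh : SemiconjBy s (h : A) (-h))

include hh in
lemma mul_expUnitary_smul (t : ℝ) :
    s * (expUnitary (t • h) : A) = (expUnitary (-(t • h)) : A) * s :=
  semiconjBy_expUnitary (by simpa using hh.smul_right t)

include hh in
lemma geodesic_eq_conj (t : ℝ) : geodesic h s t
    = expUnitary ((t / 2) • h) * s * star (expUnitary ((t / 2) • h) : A) := by
  rw [← Unitary.coe_star, star_expUnitary, mul_assoc, ← neg_smul, mul_expUnitary_smul hh, neg_smul,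
    neg_neg, ← mul_assoc, ← Submonoid.coe_mul, ← expUnitary_add_smul, add_halves, geodesic]

include hs hh

lemma geodesic_mul_geodesic (t u : ℝ) :
    geodesic h s t * geodesic h s u = expUnitary ((t - u) • h) := by
  rw [geodesic, geodesic, mul_assoc, ← mul_assoc s, mul_expUnitary_smul hh, mul_assoc _ s s,
    hs.mul_self, mul_one, sub_eq_add_neg, expUnitary_add_smul, neg_smul, Submonoid.coe_mul]

lemma isSymmetry_geodesic (t : ℝ) : IsSymmetry (geodesic h s t) where
  star_eq := by
    rw [geodesic, star_mul, hs.star_eq, ← Unitary.coe_star, star_expUnitary, ← neg_smul,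
      mul_expUnitary_smul hh, neg_smul, neg_neg]
  mul_self := by rw [geodesic_mul_geodesic hs hh, sub_self, zero_smul, expUnitary_zero]; rfl

lemma geodesic_conj (t u : ℝ) :
    geodesic h s t * geodesic h s u * geodesic h s t = geodesic h s (2 * t - u) := by
  rw [geodesic_mul_geodesic hs hh, geodesic, geodesic, ← mul_assoc, ← Submonoid.coe_mul,
    ← expUnitary_add_smul]
  ring_nf

end Anticommute

lemma semiconjBy_argSelfAdjoint (hs : IsSymmetry s) {u : unitary A} (hu : ‖(u - 1 : A)‖ < 2)
    (hsu : s * (u : A) = (star u : A) * s) :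
    SemiconjBy s (argSelfAdjoint u : A) (-argSelfAdjoint u) := by
  have hexp : expUnitary (argSelfAdjoint u) = u := expUnitary_argSelfAdjoint hu
  have hpi := norm_argSelfAdjoint_lt_pi hu
  set h := argSelfAdjoint u
  let k : selfAdjoint A := ⟨s * h * s, by
    have := IsSelfAdjoint.conjugate h.2 s
    rwa [hs.star_eq] at this⟩
  have hsk : SemiconjBy s (h : A) k := by
    change s * (h : A) = s * h * s * s
    rw [mul_assoc _ s s, hs.mul_self, mul_one]
  have hk : ‖-k‖ = ‖h‖ := by
    rw [norm_neg]
    change ‖s * (h : A) * s‖ = ‖(h : A)‖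
    rw [CStarRing.norm_mul_mem_unitary _ hs.mem_unitary,
      CStarRing.norm_mem_unitary_mul _ hs.mem_unitary]
  have hkh : h = -k := by
    refine eq_of_expUnitary_eq hpi (hk ▸ hpi) ?_
    rw [← star_expUnitary, eq_star_iff_eq_star, hexp]
    refine Subtype.ext ?_
    have := (semiconjBy_expUnitary hsk).eq
    rw [hexp, hsu] at this
    simpa [mul_assoc, hs.mul_self] using congrArg (· * s) this.symm
  simpa [hkh] using hsk

lemma IsSymmetry.exists_geodesic (hs : IsSymmetry s) (ht : IsSymmetry t) (hlt : ‖t - s‖ < 2) :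
    ∃ h : selfAdjoint A, SemiconjBy s (h : A) (-h) ∧ ‖h‖ < Real.pi ∧ geodesic h s 1 = t ∧
      ∀ r ∈ Set.Icc (0 : ℝ) 1, ‖geodesic h s r - s‖ ≤ ‖t - s‖ := by
  let u : unitary A := ⟨t, ht.mem_unitary⟩ * ⟨s, hs.mem_unitary⟩
  have hus : (u : A) * s = t := by
    change t * s * s = t
    rw [mul_assoc, hs.mul_self, mul_one]
  have hnorm : ∀ x : A, ‖x * s - s‖ = ‖x - 1‖ := fun x => by
    rw [← CStarRing.norm_mul_mem_unitary (x - 1) hs.mem_unitary, sub_mul, one_mul]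
  have hu : ‖(u - 1 : A)‖ = ‖t - s‖ := by rw [← hnorm, hus]
  have hu2 : ‖(u - 1 : A)‖ < 2 := hu ▸ hlt
  refine ⟨argSelfAdjoint u, semiconjBy_argSelfAdjoint hs hu2 ?_, norm_argSelfAdjoint_lt_pi hu2,
    ?_, fun r hr => ?_⟩
  · change s * (t * s) = star (t * s) * s
    rw [star_mul, hs.star_eq, ht.star_eq, mul_assoc]
  · rw [geodesic, one_smul, expUnitary_argSelfAdjoint hu2, hus]
  · rw [geodesic, hnorm, ← hu]
    exact norm_expUnitary_smul_argSelfAdjoint_sub_one_le u hr hu2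

end CStarAlgebra

end Symmetries

section VaisalaReflection

lemma dist_apply_nonpos_of_expanding {X : Type*} {d : X → X → ℝ} (hdc : ∀ x y, d x y = d y x)
    {H : Subgroup (Equiv.Perm X)} (hH : ∀ g ∈ H, ∀ x y, d (g x) (g y) = d x y)
    {σ : Equiv.Perm X} (hσ : ∀ x y, d (σ x) (σ y) = d x y) (hσH : ∀ g ∈ H, σ * g * σ ∈ H)
    {c : X} (hc : σ c = c) {r B : ℝ} (hr : 1 < r)
    (hexp : ∀ g ∈ H, r * d (g c) c ≤ d (g c) (σ (g c))) (hB : ∀ g ∈ H, d (g c) c ≤ B)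
    {g : Equiv.Perm X} (hg : g ∈ H) : d (g c) c ≤ 0 := by
  have hpow : ∀ k : ℕ, ∀ g ∈ H, r ^ k * d (g c) c ≤ B := by
    intro k
    induction k with
    | zero => simpa using hB
    | succ k ih =>
      intro g hg
      have hcomm : d ((σ * g⁻¹ * σ * g) c) c = d (g c) (σ (g c)) := by
        have hσc := hσ (g⁻¹ (σ (g c))) c
        have hgc := hH g hg (g⁻¹ (σ (g c))) c
        rw [hc] at hσc
        rw [show g (g⁻¹ (σ (g c))) = σ (g c) from g.apply_symm_apply _] at hgc
        rw [Equiv.Perm.mul_apply, Equiv.Perm.mul_apply, Equiv.Perm.mul_apply, hσc, ← hgc, hdc]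
      calc r ^ (k + 1) * d (g c) c = r ^ k * (r * d (g c) c) := by ring
        _ ≤ r ^ k * d ((σ * g⁻¹ * σ * g) c) c := by
          rw [hcomm]
          exact mul_le_mul_of_nonneg_left (hexp g hg) (by positivity)
        _ ≤ B := ih _ (H.mul_mem (hσH _ (H.inv_mem hg)) hg)
  by_contra! hpos
  obtain ⟨k, hk⟩ := pow_unbounded_of_one_lt (B / d (g c) c) hr
  rw [div_lt_iff₀ hpos] at hk
  exact (hpow k g hg).not_gt hk

end VaisalaReflection

section SymmetrySpace

open scoped Matrix.Norms.L2Operator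

variable {m : Type*} [Fintype m] [DecidableEq m] {p : ℝ} {τ : ℂ}

lemma IsSymmetry.mul_schattenPow_sub_le (hp : 0 < p) {s t : Matrix m m ℂ} (hs : IsSymmetry s)
    (ht : IsSymmetry t) (hst : ‖s - t‖ ≤ 1) :
    (3 : ℝ) ^ (p / 2) * schattenPow p (s - t) ≤ schattenPow p (s - t * s * t) := by
  have hpos := posSemidef_conjTranspose_mul_self (s - t)
  have hsa : (s - t)ᴴ = s - t := by
    rw [← star_eq_conjTranspose, star_sub, hs.star_eq, ht.star_eq]
  have hsa' : (s - t * s * t)ᴴ = s - t * s * t := by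
    rw [← star_eq_conjTranspose, star_sub, hs.star_eq, (ht.conj hs).star_eq]
  set V := hpos.isHermitian.eigenvectorUnitary
  set a := hpos.isHermitian.eigenvalues
  have ha0 : ∀ i, 0 ≤ a i := hpos.eigenvalues_nonneg
  have ha1 : ∀ i, a i ≤ 1 := fun i => by
    have hnorm := norm_sq_eq_norm_eigenvalues (s - t)
    calc a i = ‖(a i : ℂ)‖ := (Complex.norm_of_nonneg (ha0 i)).symm
      _ ≤ ‖s - t‖ ^ 2 := hnorm ▸ norm_le_pi_norm (fun j => (a j : ℂ)) i
      _ ≤ 1 := pow_le_one₀ (norm_nonneg _) hst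
  have hdiag : (s - t) * (s - t) = conjDiag V fun i => (a i : ℂ) := by
    rw [← congrArg (· * (s - t)) hsa]
    exact hpos.isHermitian.spectral_theorem
  have hdiag' : (s - t * s * t)ᴴ * (s - t * s * t)
      = conjDiag V fun i => ((4 * a i - a i * a i : ℝ) : ℂ) := by
    rw [hsa', hs.sub_conj_mul_self ht, hdiag, ← map_mul, ← map_ofNat (conjDiag V) 4, ← map_mul,
      ← map_sub]
    congr 1 with i
    simp
  rw [schattenPow_eq_sum hdiag', schattenPow, Finset.mul_sum]
  refine Finset.sum_le_sum fun i _ => ?_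
  rw [← Real.mul_rpow (by norm_num) (ha0 i)]
  refine Real.rpow_le_rpow (by linarith [ha0 i]) ?_ (by positivity)
  nlinarith [ha0 i, ha1 i]

variable (m τ) in
/-- The Grassmann manifold of symmetries of trace `τ`. -/
abbrev Symm := {s : Matrix m m ℂ // IsSymmetry s ∧ s.trace = τ}

/-- The geodesic reflection `x ↦ c x c` of the space of symmetries at the point `c`. -/
def reflection (c : Symm m τ) : Equiv.Perm (Symm m τ) :=
  Function.Involutive.toPerm
    (fun x => ⟨c.1 * x.1 * c.1, c.2.1.conj x.2.1, by
      rw [trace_mul_comm, ← Matrix.mul_assoc, c.2.1.mul_self, Matrix.one_mul, x.2.2]⟩)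
    fun x => Subtype.ext (c.2.1.conj_conj x.1)

lemma coe_reflection (c x : Symm m τ) : (reflection c x).1 = c.1 * x.1 * c.1 := rfl

lemma reflection_self (c : Symm m τ) : reflection c c = c :=
  Subtype.ext (by rw [coe_reflection, c.2.1.mul_self, Matrix.one_mul])

lemma reflection_reflection (c x : Symm m τ) : reflection c (reflection c x) = x :=
  (reflection c).left_inv x

variable (m τ) in
/-- The group of Schatten-`p` isometries of the space of symmetries. -/
def isometryGroup (p : ℝ) : Subgroup (Equiv.Perm (Symm m τ)) where
  carrier := {g | ∀ x y, schattenPow p ((g x).1 - (g y).1) = schattenPow p (x.1 - y.1)}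
  one_mem' _ _ := rfl
  mul_mem' hg hh x y := (hg _ _).trans (hh x y)
  inv_mem' {g} hg x y := by
    have h := hg (g⁻¹ x) (g⁻¹ y)
    rw [← Equiv.Perm.mul_apply, ← Equiv.Perm.mul_apply, mul_inv_cancel] at h
    exact h.symm

lemma reflection_mem_isometryGroup (c : Symm m τ) : reflection c ∈ isometryGroup m τ p := by
  intro x y
  rw [coe_reflection, coe_reflection, ← sub_mul, ← mul_sub]
  exact (schattenPow_mul_unitary _ ⟨c.1, c.2.1.mem_unitary⟩).trans
    (schattenPow_unitary_mul ⟨c.1, c.2.1.mem_unitary⟩ _)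

lemma apply_eq_self_of_fixes_endpoints (hp : 0 < p) {a c : Symm m τ}
    (hac : schattenPow p (a.1 - c.1) ≤ (1 / 2) ^ p) {g : Equiv.Perm (Symm m τ)}
    (hg : g ∈ isometryGroup m τ p) (hga : g a = a) (hgb : g (reflection c a) = reflection c a) :
    g c = c := by
  let H := isometryGroup m τ p ⊓ MulAction.stabilizer _ a ⊓ MulAction.stabilizer _ (reflection c a)
  have hH : ∀ g, g ∈ H ↔ g ∈ isometryGroup m τ p ∧ g a = a ∧ g (reflection c a) = reflection c a :=
    fun g => by
      simp only [H, Subgroup.mem_inf, MulAction.mem_stabilizer_iff, Equiv.Perm.smul_def, and_assoc]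
  have hnear : ∀ g ∈ H, ‖(g c).1 - c.1‖ ≤ 1 := fun g hg => by
    obtain ⟨hgi, hga, -⟩ := (hH g).mp hg
    have hgac := hgi a c
    rw [hga] at hgac
    have hnorm := norm_le_of_schattenPow_le hp (by norm_num) hac
    have hnorm' := norm_le_of_schattenPow_le hp (by norm_num) (hgac.trans_le hac)
    rw [norm_sub_rev] at hnorm'
    linarith [norm_sub_le_norm_sub_add_norm_sub (g c).1 a.1 c.1]
  have hzero := dist_apply_nonpos_of_expanding
    (d := fun x y : Symm m τ => schattenPow p (x.1 - y.1))
    (H := H) (σ := reflection c) (c := c) (r := 3 ^ (p / 2)) (B := Fintype.card m)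
    (fun x y => schattenPow_sub_comm _ _) (fun g hg => ((hH g).mp hg).1)
    (reflection_mem_isometryGroup c) (fun g hg => ?_) (reflection_self c)
    (Real.one_lt_rpow (by norm_num) (half_pos hp))
    (fun g hg => (g c).2.1.mul_schattenPow_sub_le hp c.2.1 (hnear g hg)) (fun g hg => ?_)
    ((hH g).mpr ⟨hg, hga, hgb⟩)
  · have hgc := (schattenPow_eq_zero_iff hp).mp (hzero.antisymm (schattenPow_nonneg _))
    exact Subtype.ext (sub_eq_zero.mp hgc)
  · obtain ⟨hgi, hga, hgb⟩ := (hH g).mp hg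
    have hr := reflection_mem_isometryGroup (p := p) c
    refine (hH _).mpr ⟨mul_mem (mul_mem hr hgi) hr, ?_, ?_⟩
    · simp only [Equiv.Perm.mul_apply, hgb, reflection_reflection]
    · simp only [Equiv.Perm.mul_apply, reflection_reflection, hga]
  · refine (schattenPow_le_card_mul_norm_rpow hp _).trans ?_
    exact mul_le_of_le_one_right (Nat.cast_nonneg _)
      (Real.rpow_le_one (norm_nonneg _) (hnear g hg) hp.le)

end SymmetrySpace

section LocalMazurUlam

open selfAdjoint
open scoped Matrix.Norms.L2Operator

variable {m : Type*} [Fintype m] [DecidableEq m] {p : ℝ} {τ : ℂ}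

/-- The points of a geodesic of symmetries, as elements of the space of symmetries. -/
noncomputable def Symm.geodesic (s : Symm m τ) {h : selfAdjoint (Matrix m m ℂ)}
    (hh : SemiconjBy s.1 (h : Matrix m m ℂ) (-h)) (t : ℝ) : Symm m τ :=
  ⟨GrassmannIsometry.geodesic h s.1 t, isSymmetry_geodesic s.2.1 hh t, by
    rw [geodesic_eq_conj hh, trace_mul_comm, ← Matrix.mul_assoc, Unitary.coe_star_mul_self,
      Matrix.one_mul, s.2.2]⟩

lemma Symm.reflection_geodesic (s : Symm m τ) {h : selfAdjoint (Matrix m m ℂ)}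
    (hh : SemiconjBy s.1 (h : Matrix m m ℂ) (-h)) (t u : ℝ) :
    reflection (s.geodesic hh t) (s.geodesic hh u) = s.geodesic hh (2 * t - u) :=
  Subtype.ext (geodesic_conj s.2.1 hh t u)

lemma Symm.geodesic_zero (s : Symm m τ) {h : selfAdjoint (Matrix m m ℂ)}
    (hh : SemiconjBy s.1 (h : Matrix m m ℂ) (-h)) : s.geodesic hh 0 = s :=
  Subtype.ext (GrassmannIsometry.geodesic_zero h s.1)

lemma Symm.continuous_geodesic (s : Symm m τ) {h : selfAdjoint (Matrix m m ℂ)}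
    (hh : SemiconjBy s.1 (h : Matrix m m ℂ) (-h)) : Continuous (s.geodesic hh) :=
  (GrassmannIsometry.continuous_geodesic h s.1).subtype_mk _

lemma Symm.exists_geodesic {s t : Symm m τ} (hlt : ‖t.1 - s.1‖ < 2) :
    ∃ (h : selfAdjoint (Matrix m m ℂ)) (hh : SemiconjBy s.1 (h : Matrix m m ℂ) (-h)),
      ‖h‖ < Real.pi ∧ s.geodesic hh 1 = t ∧
        ∀ r ∈ Set.Icc (0 : ℝ) 1, ‖(s.geodesic hh r).1 - s.1‖ ≤ ‖t.1 - s.1‖ := by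
  obtain ⟨h, hh, hpi, hone, hr⟩ := s.2.1.exists_geodesic t.2.1 hlt
  exact ⟨h, hh, hpi, Subtype.ext hone, hr⟩

lemma eq_of_reflection_eq_self {c x : Symm m τ} (h : reflection c x = x) (hlt : ‖x.1 - c.1‖ < 2) :
    x = c := by
  refine Subtype.ext (x.2.1.eq_of_commute c.2.1 ?_ hlt)
  have hx : c.1 * x.1 * c.1 = x.1 := congrArg Subtype.val h
  calc x.1 * c.1 = c.1 * x.1 * (c.1 * c.1) := by rw [← Matrix.mul_assoc, hx]
    _ = c.1 * x.1 := by rw [c.2.1.mul_self, Matrix.mul_one]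

lemma map_reflection (hp : 0 < p) {ψ : Equiv.Perm (Symm m τ)} (hψ : ψ ∈ isometryGroup m τ p)
    {a c : Symm m τ} (hac : schattenPow p (a.1 - c.1) ≤ (1 / 2) ^ p) :
    ψ (reflection c a) = reflection (ψ c) (ψ a) := by
  set b := reflection c a with hb
  have hbc : schattenPow p (b.1 - c.1) ≤ (1 / 2) ^ p := by
    have := reflection_mem_isometryGroup (p := p) c a c
    rw [reflection_self] at this
    exact this.trans_le hac
  have hnorm : ∀ x : Symm m τ, schattenPow p (x.1 - c.1) ≤ (1 / 2) ^ p →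
      ‖(ψ x).1 - (ψ c).1‖ ≤ 1 / 2 := fun x hx =>
    norm_le_of_schattenPow_le hp (by norm_num) ((hψ x c).trans_le hx)
  have hψac : ‖(ψ c).1 - (ψ a).1‖ ≤ 1 / 2 := norm_sub_rev (ψ a).1 (ψ c).1 ▸ hnorm a hac
  have hψba : ‖(ψ b).1 - (ψ a).1‖ ≤ 1 := by
    linarith [norm_sub_le_norm_sub_add_norm_sub (ψ b).1 (ψ c).1 (ψ a).1, hnorm b hbc]
  obtain ⟨k, hk, -, hk1, hkr⟩ := Symm.exists_geodesic (hψba.trans_lt one_lt_two)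
  set c' := (ψ a).geodesic hk (1 / 2)
  have hc'a : reflection c' (ψ a) = ψ b := by
    have := (ψ a).reflection_geodesic hk (1 / 2) 0
    rwa [Symm.geodesic_zero, show (2 : ℝ) * (1 / 2) - 0 = 1 by norm_num, hk1] at this
  have hfix : (ψ⁻¹ * reflection c' * ψ * reflection c) c = c := by
    refine apply_eq_self_of_fixes_endpoints hp hac ?_ ?_ ?_
    · exact mul_mem (mul_mem (mul_mem (inv_mem hψ) (reflection_mem_isometryGroup c')) hψ)
        (reflection_mem_isometryGroup c)
    · simp only [Equiv.Perm.mul_apply, Equiv.Perm.inv_eq_iff_eq]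
      rw [← hb, ← hc'a, reflection_reflection]
    · simp only [Equiv.Perm.mul_apply, Equiv.Perm.inv_eq_iff_eq]
      rw [reflection_reflection, hc'a]
  simp only [Equiv.Perm.mul_apply, reflection_self, Equiv.Perm.inv_eq_iff_eq] at hfix
  have hψc : ψ c = c' := by
    refine eq_of_reflection_eq_self hfix ?_
    have := hkr (1 / 2) ⟨by norm_num, by norm_num⟩
    rw [norm_sub_rev] at this
    linarith [norm_sub_le_norm_sub_add_norm_sub (ψ c).1 (ψ a).1 c'.1]
  rw [hψc, hc'a]

end LocalMazurUlam

section GeodesicMaps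

open selfAdjoint Filter Topology
open scoped Matrix.Norms.L2Operator

variable {m : Type*} [Fintype m] [DecidableEq m] {p : ℝ} {τ : ℂ} {ψ : Equiv.Perm (Symm m τ)}
  {h k : selfAdjoint (Matrix m m ℂ)}

lemma continuous_of_mem_isometryGroup (hp : 0 < p) (hψ : ψ ∈ isometryGroup m τ p) :
    Continuous ψ := by
  refine (LipschitzWith.of_dist_le_mul (K := (Fintype.card m : NNReal) ^ (1 / p))
    fun x y => ?_).continuous
  rw [Subtype.dist_eq, Subtype.dist_eq, dist_eq_norm, dist_eq_norm, NNReal.coe_rpow,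
    NNReal.coe_natCast, ← Real.rpow_le_rpow_iff (norm_nonneg _) (by positivity) hp,
    Real.mul_rpow (by positivity) (norm_nonneg _), one_div,
    Real.rpow_inv_rpow (by positivity) hp.ne']
  calc _ ≤ schattenPow p ((ψ x).1 - (ψ y).1) := norm_rpow_le_schattenPow hp _
    _ = schattenPow p (x.1 - y.1) := hψ x y
    _ ≤ _ := schattenPow_le_card_mul_norm_rpow hp _

lemma schattenPow_geodesic_sub {s : Matrix m m ℂ} (hs : IsSymmetry s) (t u : ℝ) :
    schattenPow p (geodesic h s t - geodesic h s u)
      = schattenPow p ((expUnitary ((t - u) • h) : Matrix m m ℂ) - 1) := by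
  rw [geodesic_sub_geodesic]
  exact (schattenPow_unitary_mul _ _).trans (schattenPow_mul_unitary _ ⟨s, hs.mem_unitary⟩)

lemma schattenPow_geodesic_sub_self {s : Matrix m m ℂ} (hs : IsSymmetry s) (t : ℝ) :
    schattenPow p (geodesic h s t - s)
      = schattenPow p ((expUnitary (t • h) : Matrix m m ℂ) - 1) := by
  simpa only [geodesic_zero, sub_zero] using schattenPow_geodesic_sub (h := h) hs t 0

lemma norm_geodesic_one_sub {s : Matrix m m ℂ} (hs : IsSymmetry s) :
    ‖(expUnitary h : Matrix m m ℂ) - 1‖ = ‖geodesic h s 1 - s‖ := by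
  rw [geodesic, one_smul, ← CStarRing.norm_mul_mem_unitary _ hs.mem_unitary, sub_mul, one_mul]

lemma geodesic_right_injective {s : Matrix m m ℂ} (hs : IsSymmetry s) {t u : ℝ}
    (heq : geodesic h s t = geodesic k s u) : expUnitary (t • h) = expUnitary (u • k) := by
  refine Subtype.ext ?_
  simpa [geodesic, mul_assoc, hs.mul_self] using congrArg (· * s) heq

lemma exists_forall_schattenPow_expUnitary_le (hp : 0 < p) (h : selfAdjoint (Matrix m m ℂ)) :
    ∃ r > (0 : ℝ), ∀ u ∈ Set.Icc 0 r,
      schattenPow p ((expUnitary (u • h) : Matrix m m ℂ) - 1) ≤ (1 / 2) ^ p := by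
  have hcont : Continuous fun u : ℝ =>
      (Fintype.card m : ℝ) * ‖(expUnitary (u • h) : Matrix m m ℂ) - 1‖ ^ p := by
    have : Continuous fun u : ℝ => (expUnitary (u • h) : Matrix m m ℂ) :=
      continuous_subtype_val.comp (continuous_expUnitary.comp (by fun_prop))
    exact continuous_const.mul ((this.sub continuous_const).norm.rpow_const fun _ => .inr hp.le)
  have hev : ∀ᶠ u : ℝ in 𝓝 0,
      (Fintype.card m : ℝ) * ‖(expUnitary (u • h) : Matrix m m ℂ) - 1‖ ^ p < (1 / 2) ^ p := by
    refine hcont.continuousAt.eventually_lt_const ?_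
    simp only [zero_smul, expUnitary_zero, OneMemClass.coe_one, sub_self, norm_zero,
      Real.zero_rpow hp.ne', mul_zero]
    positivity
  obtain ⟨ε, hε, hball⟩ := Metric.eventually_nhds_iff.mp hev
  refine ⟨ε / 2, half_pos hε, fun u hu =>
    (schattenPow_le_card_mul_norm_rpow hp _).trans (hball ?_).le⟩
  rw [Real.dist_eq, sub_zero, abs_of_nonneg hu.1]
  linarith [hu.2]

variable {s : Symm m τ} (hs : SemiconjBy s.1 (h : Matrix m m ℂ) (-h))
  (hk : SemiconjBy (ψ s).1 (k : Matrix m m ℂ) (-k))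

lemma map_geodesic_half (hp : 0 < p) (hψ : ψ ∈ isometryGroup m τ p) {δ : ℝ}
    (hδ : schattenPow p ((expUnitary ((δ / 2) • h) : Matrix m m ℂ) - 1) ≤ (1 / 2) ^ p)
    (hpi : ‖δ • k‖ < Real.pi) (heq : ψ (s.geodesic hs δ) = (ψ s).geodesic hk δ) :
    ψ (s.geodesic hs (δ / 2)) = (ψ s).geodesic hk (δ / 2) := by
  have hclose : schattenPow p (s.1 - (s.geodesic hs (δ / 2)).1) ≤ (1 / 2) ^ p := by
    rw [schattenPow_sub_comm]
    exact (schattenPow_geodesic_sub_self s.2.1 _).trans_le hδ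
  have hnorm : ‖(ψ (s.geodesic hs (δ / 2))).1 - (ψ s).1‖ ≤ 1 / 2 := by
    rw [norm_sub_rev]
    exact norm_le_of_schattenPow_le hp (by norm_num) ((hψ _ _).trans_le hclose)
  obtain ⟨l, hl, hlpi, hl1, -⟩ := Symm.exists_geodesic (hnorm.trans_lt (by norm_num))
  have hl2 : ‖l‖ < Real.pi / 2 := by
    refine norm_lt_pi_div_two_of_norm_expUnitary_sub_one_le hlpi ?_
    rw [norm_geodesic_one_sub (ψ s).2.1]
    have : GrassmannIsometry.geodesic l (ψ s).1 1 = _ := congrArg Subtype.val hl1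
    rw [this]
    linarith
  have hdouble : (ψ s).geodesic hl 2 = (ψ s).geodesic hk δ := by
    have hrefl := map_reflection hp hψ hclose
    rw [← hl1] at hrefl
    nth_rw 2 [← s.geodesic_zero hs] at hrefl
    nth_rw 2 [← (ψ s).geodesic_zero hl] at hrefl
    rw [Symm.reflection_geodesic, Symm.reflection_geodesic] at hrefl
    ring_nf at hrefl
    rw [← hrefl, heq]
  have hlk : (2 : ℝ) • l = δ • k := by
    refine eq_of_expUnitary_eq ?_ hpi
      (geodesic_right_injective (ψ s).2.1 (congrArg Subtype.val hdouble))
    rw [norm_smul, Real.norm_eq_abs, abs_of_pos two_pos]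
    linarith
  rw [← hl1]
  refine Subtype.ext ?_
  change GrassmannIsometry.geodesic l (ψ s).1 1 = GrassmannIsometry.geodesic k (ψ s).1 (δ / 2)
  rw [show δ / 2 = 1 / 2 * δ by ring, ← geodesic_smul, ← hlk, geodesic_smul,
    one_div_mul_cancel two_ne_zero]

lemma map_geodesic_natCast_mul (hp : 0 < p) (hψ : ψ ∈ isometryGroup m τ p) {δ : ℝ}
    (hδ : schattenPow p ((expUnitary (δ • h) : Matrix m m ℂ) - 1) ≤ (1 / 2) ^ p)
    (heq : ψ (s.geodesic hs δ) = (ψ s).geodesic hk δ) (j : ℕ) :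
    ψ (s.geodesic hs (j * δ)) = (ψ s).geodesic hk (j * δ) := by
  induction j using Nat.twoStepInduction with
  | zero => simp only [Nat.cast_zero, zero_mul, Symm.geodesic_zero]
  | one => simpa only [Nat.cast_one, one_mul] using heq
  | more j hj hj1 =>
    have hclose : schattenPow p
        ((s.geodesic hs (j * δ)).1 - (s.geodesic hs ((j + 1 : ℕ) * δ)).1) ≤ (1 / 2) ^ p := by
      rw [schattenPow_sub_comm]
      refine (schattenPow_geodesic_sub s.2.1 _ _).trans_le ?_
      rwa [show ((j + 1 : ℕ) : ℝ) * δ - j * δ = δ by push_cast; ring]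
    have hrefl := map_reflection hp hψ hclose
    rw [hj, hj1, Symm.reflection_geodesic, Symm.reflection_geodesic,
      show 2 * (((j + 1 : ℕ) : ℝ) * δ) - j * δ = ((j + 2 : ℕ) : ℝ) * δ by push_cast; ring] at hrefl
    exact hrefl

lemma map_geodesic_of_small (hp : 0 < p) (hψ : ψ ∈ isometryGroup m τ p)
    (hsmall : ∀ u ∈ Set.Icc (0 : ℝ) 1,
      schattenPow p ((expUnitary (u • h) : Matrix m m ℂ) - 1) ≤ (1 / 2) ^ p)
    (hpi : ‖k‖ < Real.pi) (heq : ψ (s.geodesic hs 1) = (ψ s).geodesic hk 1) {t : ℝ} (ht : 0 ≤ t) :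
    ψ (s.geodesic hs t) = (ψ s).geodesic hk t := by
  have hmem : ∀ j : ℕ, (1 / 2 : ℝ) ^ j ∈ Set.Icc (0 : ℝ) 1 := fun j =>
    ⟨by positivity, pow_le_one₀ (by norm_num) (by norm_num)⟩
  have hpow : ∀ j : ℕ, ψ (s.geodesic hs ((1 / 2) ^ j)) = (ψ s).geodesic hk ((1 / 2) ^ j) := by
    intro j
    induction j with
    | zero => simpa using heq
    | succ j ih =>
      have hj := hmem j
      rw [pow_succ, mul_one_div]
      refine map_geodesic_half hs hk hp hψ (hsmall _ ?_) ?_ ih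
      · rw [← mul_one_div, ← pow_succ]
        exact hmem (j + 1)
      · rw [norm_smul, Real.norm_eq_abs, abs_of_nonneg hj.1]
        exact (mul_le_of_le_one_left (norm_nonneg k) hj.2).trans_lt hpi
  have hlim : Tendsto (fun j : ℕ => (⌊t * 2 ^ j⌋₊ : ℝ) * (1 / 2) ^ j) atTop (𝓝 t) := by
    have := (tendsto_nat_floor_mul_div_atTop ht).comp
      (tendsto_pow_atTop_atTop_of_one_lt (one_lt_two (α := ℝ)))
    refine this.congr fun j => ?_
    simp [div_eq_mul_inv]
  have hψc := continuous_of_mem_isometryGroup hp hψ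
  refine tendsto_nhds_unique
    (((hψc.comp (s.continuous_geodesic hs)).tendsto t).comp hlim)
    (((((ψ s).continuous_geodesic hk).tendsto t).comp hlim).congr fun j => ?_)
  exact (map_geodesic_natCast_mul hs hk hp hψ (hsmall _ (hmem j)) (hpow j) _).symm

lemma exists_map_geodesic (hp : 0 < p) (hψ : ψ ∈ isometryGroup m τ p) :
    ∃ (k : selfAdjoint (Matrix m m ℂ)) (hk : SemiconjBy (ψ s).1 (k : Matrix m m ℂ) (-k)),
      ∀ t ≥ 0, ψ (s.geodesic hs t) = (ψ s).geodesic hk t := by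
  obtain ⟨r, hr, hsmall⟩ := exists_forall_schattenPow_expUnitary_le hp h
  have hrs : SemiconjBy s.1 ((r • h : selfAdjoint (Matrix m m ℂ)) : Matrix m m ℂ)
      (-(r • h : selfAdjoint (Matrix m m ℂ))) := by simpa using hs.smul_right r
  have hclose : schattenPow p ((s.geodesic hs r).1 - s.1) ≤ (1 / 2) ^ p :=
    (schattenPow_geodesic_sub_self s.2.1 r).trans_le (hsmall r ⟨hr.le, le_rfl⟩)
  have hlt : ‖(ψ (s.geodesic hs r)).1 - (ψ s).1‖ < 2 :=
    (norm_le_of_schattenPow_le hp (by norm_num) ((hψ _ _).trans_le hclose)).trans_lt (by norm_num)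
  obtain ⟨k, hk, hpi, hk1, -⟩ := Symm.exists_geodesic hlt
  have hscale : ∀ t, s.geodesic hrs t = s.geodesic hs (t * r) := fun t =>
    Subtype.ext (geodesic_smul h s.1 r t)
  have hk' : SemiconjBy (ψ s).1 ((r⁻¹ • k : selfAdjoint (Matrix m m ℂ)) : Matrix m m ℂ)
      (-(r⁻¹ • k : selfAdjoint (Matrix m m ℂ))) := by simpa using hk.smul_right r⁻¹
  refine ⟨r⁻¹ • k, hk', fun t ht => ?_⟩
  have := map_geodesic_of_small hrs hk hp hψ (fun u hu => ?_) hpi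
    (by rw [hscale, one_mul, hk1]) (div_nonneg ht hr.le)
  · rw [hscale, div_mul_cancel₀ t hr.ne'] at this
    rw [this]
    refine Subtype.ext ((geodesic_smul k (ψ s).1 r⁻¹ t).trans ?_).symm
    rw [← div_eq_mul_inv]
    rfl
  · rw [smul_smul]
    exact hsmall _ ⟨mul_nonneg hu.1 hr.le, mul_le_of_le_one_left hr.le hu.2⟩

end GeodesicMaps

section TraceForm

open selfAdjoint Filter Topology
open scoped Matrix.Norms.L2Operator

variable {m : Type*} [Fintype m] [DecidableEq m] {p : ℝ} {τ : ℂ} {ψ : Equiv.Perm (Symm m τ)}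
  {h : selfAdjoint (Matrix m m ℂ)} {V : unitaryGroup m ℂ} {a : m → ℝ}

lemma expUnitary_smul_eq_conjDiag (ha : (h : Matrix m m ℂ) = conjDiag V fun i => (a i : ℂ))
    (t : ℝ) : (expUnitary (t • h) : Matrix m m ℂ)
      = conjDiag V fun i => Complex.exp (Complex.I * ↑(t * a i)) := by
  have hI : (Complex.I • (t • h : selfAdjoint (Matrix m m ℂ)) : Matrix m m ℂ)
      = conjDiag V (fun i => Complex.I * ↑(t * a i)) := by
    rw [selfAdjoint.val_smul, ha, ← Complex.coe_smul, smul_smul, ← map_smul]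
    congr 1 with i
    simp [mul_assoc]
  rw [expUnitary_coe, hI, ← NormedSpace.map_exp _ (isometry_conjDiag V).continuous, Pi.exp_def]
  simp only [Complex.exp_eq_exp_ℂ]

lemma schattenPow_expUnitary_sub_one (ha : (h : Matrix m m ℂ) = conjDiag V fun i => (a i : ℂ))
    (t : ℝ) : schattenPow p ((expUnitary (t • h) : Matrix m m ℂ) - 1)
      = 2 ^ p * ∑ i, |Real.sin (t * (a i / 2))| ^ p := by
  rw [expUnitary_smul_eq_conjDiag ha, ← map_one (conjDiag V), ← map_sub, schattenPow_conjDiag,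
    Finset.mul_sum]
  refine Finset.sum_congr rfl fun i _ => ?_
  rw [Pi.sub_apply, Pi.one_apply, Complex.norm_exp_I_mul_ofReal_sub_one, mul_div_assoc, norm_mul,
    Real.norm_eq_abs, Real.norm_eq_abs, abs_two, Real.mul_rpow zero_le_two (abs_nonneg _)]

lemma trace_expUnitary {s : Matrix m m ℂ} (hs : IsSymmetry s)
    (hh : SemiconjBy s (h : Matrix m m ℂ) (-h))
    (ha : (h : Matrix m m ℂ) = conjDiag V fun i => (a i : ℂ)) :
    (expUnitary h : Matrix m m ℂ).trace = ((∑ i, Real.cos (a i) : ℝ) : ℂ) := by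
  have hneg : (expUnitary (-h) : Matrix m m ℂ).trace = (expUnitary h : Matrix m m ℂ).trace := by
    have hconj : s * (expUnitary h : Matrix m m ℂ) = expUnitary (-h) * s :=
      (semiconjBy_expUnitary hh).eq
    rw [← Matrix.mul_one (expUnitary (-h) : Matrix m m ℂ), ← hs.mul_self, ← Matrix.mul_assoc,
      ← hconj, trace_mul_comm, ← Matrix.mul_assoc, hs.mul_self, Matrix.one_mul]
  have hexp := fun t : ℝ => congrArg trace (expUnitary_smul_eq_conjDiag ha t)
  simp only [trace_conjDiag] at hexp
  have hone := hexp 1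
  have hnegone := hexp (-1)
  rw [one_smul] at hone
  rw [neg_one_smul, hneg] at hnegone
  rw [← mul_right_inj' (two_ne_zero (α := ℂ)), two_mul]
  nth_rw 1 [hone]
  rw [hnegone, ← Finset.sum_add_distrib, Complex.ofReal_sum, Finset.mul_sum]
  refine Finset.sum_congr rfl fun i _ => ?_
  rw [Complex.ofReal_cos, Complex.two_cos]
  push_cast
  ring_nf

lemma trace_map_mul_map_of_norm_sub_lt_two (hp : 0 < p) (hψ : ψ ∈ isometryGroup m τ p)
    {s t : Symm m τ} (hlt : ‖t.1 - s.1‖ < 2) :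
    ((ψ t).1 * (ψ s).1).trace = (t.1 * s.1).trace := by
  obtain ⟨h, hs, -, rfl, -⟩ := Symm.exists_geodesic hlt
  obtain ⟨k, hk, hmap⟩ := exists_map_geodesic hs hp hψ
  obtain ⟨V, a, ha⟩ := exists_conjDiag h.2
  obtain ⟨W, b, hb⟩ := exists_conjDiag k.2
  have hmul : ∀ (x : Symm m τ) (l : selfAdjoint (Matrix m m ℂ))
      (hl : SemiconjBy x.1 (l : Matrix m m ℂ) (-l)), (x.geodesic hl 1).1 * x.1 = expUnitary l :=
    fun x l hl => by
      have := geodesic_mul_geodesic x.2.1 hl 1 0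
      rwa [GrassmannIsometry.geodesic_zero, sub_zero, one_smul] at this
  rw [hmap 1 zero_le_one, hmul, hmul, trace_expUnitary s.2.1 hs ha,
    trace_expUnitary (ψ s).2.1 hk hb]
  refine congrArg _ ?_
  have hcos := sum_cos_eq_of_sum_abs_sin_rpow_eq hp (a := fun i => b i / 2)
    (b := fun i => a i / 2) fun t ht => ?_
  · simpa only [mul_div_cancel₀ _ (two_ne_zero (α := ℝ))] using hcos
  · refine mul_left_cancel₀ (Real.rpow_pos_of_pos two_pos p).ne' ?_
    rw [← schattenPow_expUnitary_sub_one ha, ← schattenPow_expUnitary_sub_one hb]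
    calc _ = schattenPow p (((ψ s).geodesic hk t).1 - (ψ s).1) :=
          (schattenPow_geodesic_sub_self (ψ s).2.1 t).symm
      _ = schattenPow p ((s.geodesic hs t).1 - s.1) := hmap t ht.le ▸ hψ _ s
      _ = _ := schattenPow_geodesic_sub_self s.2.1 t

end TraceForm

section Density

open selfAdjoint Filter Topology Polynomial
open scoped Matrix.Norms.L2Operator

variable {m : Type*} [Fintype m] [DecidableEq m]

lemma IsSymmetry.exists_charpoly_eq {s : Matrix m m ℂ} (hs : IsSymmetry s) :
    ∃ j l : ℕ, s.charpoly = (X - C 1) ^ j * (X - C (-1)) ^ l ∧ j + l = Fintype.card m ∧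
      s.trace = j - l := by
  obtain ⟨V, a, ha⟩ := exists_conjDiag hs.star_eq
  have hsq : ∀ i, a i = 1 ∨ a i = -1 := fun i => by
    have hone := (ha ▸ hs.mul_self).trans (map_one (conjDiag V)).symm
    have := congrFun ((isometry_conjDiag V).injective ((map_mul (conjDiag V) _ _).trans hone)) i
    rw [Pi.mul_apply, Pi.one_apply] at this
    exact mul_self_eq_one_iff.mp (by exact_mod_cast this)
  have hite : ∀ i, (a i : ℂ) = if a i = 1 then 1 else -1 := fun i => by
    rcases hsq i with h | h <;> norm_num [h]
  have hcharpoly := ha ▸ charpoly_conjDiag V fun i => (a i : ℂ)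
  have htrace := ha ▸ trace_conjDiag V fun i => (a i : ℂ)
  simp_rw [hite] at hcharpoly htrace
  refine ⟨(Finset.univ.filter fun i => a i = 1).card,
    (Finset.univ.filter fun i => ¬ a i = 1).card, ?_, ?_, ?_⟩
  · rw [hcharpoly, ← Finset.prod_const, ← Finset.prod_const, ← Finset.prod_ite]
    exact Finset.prod_congr rfl fun i _ => by split_ifs <;> rfl
  · exact Finset.card_filter_add_card_filter_not _
  · rw [htrace, Finset.sum_ite, Finset.sum_const, Finset.sum_const, nsmul_one, nsmul_eq_mul,
      mul_neg_one, sub_eq_add_neg]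

lemma IsSymmetry.charpoly_eq_of_trace_eq {s t : Matrix m m ℂ} (hs : IsSymmetry s)
    (ht : IsSymmetry t) (h : s.trace = t.trace) : s.charpoly = t.charpoly := by
  obtain ⟨j, l, hsc, hsum, htr⟩ := hs.exists_charpoly_eq
  obtain ⟨j', l', htc, hsum', htr'⟩ := ht.exists_charpoly_eq
  have hdiff : (j : ℤ) - l = j' - l' := by
    rw [htr, htr'] at h
    exact_mod_cast h
  obtain rfl : j = j' := by omega
  obtain rfl : l = l' := by omega
  rw [hsc, htc]

lemma exists_unitary_conj_eq_of_charpoly_eq {A B : Matrix m m ℂ} (hA : A.IsHermitian)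
    (hB : B.IsHermitian) (h : A.charpoly = B.charpoly) :
    ∃ U : unitaryGroup m ℂ, (U : Matrix m m ℂ) * A * star (U : Matrix m m ℂ) = B := by
  refine ⟨hB.eigenvectorUnitary * star hA.eigenvectorUnitary, ?_⟩
  have hAV := hA.spectral_theorem
  rw [(hA.eigenvalues_eq_eigenvalues_iff hB).mpr h] at hAV
  have := hA.conjStarAlgAut_star_eigenvectorUnitary
  rw [(hA.eigenvalues_eq_eigenvalues_iff hB).mpr h] at this
  conv_rhs => rw [hB.spectral_theorem, ← this]
  simp only [Unitary.conjStarAlgAut_apply, Unitary.coe_star, UnitaryGroup.mul_val, star_mul,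
    star_star, Matrix.mul_assoc]

lemma exists_selfAdjoint_conj_eq (U : unitaryGroup m ℂ) :
    ∃ h : selfAdjoint (Matrix m m ℂ), ∀ A : Matrix m m ℂ,
      (expUnitary h : Matrix m m ℂ) * A * star (expUnitary h : Matrix m m ℂ)
        = U * A * star (U : Matrix m m ℂ) := by
  have hinf : (Metric.sphere (0 : ℂ) 1).Infinite :=
    (isPreconnected_sphere (by rw [Complex.rank_real_complex]; norm_num) 0 1).infinite_of_nontrivial
      ⟨1, by simp, -1, by simp, by norm_num⟩
  -- A phase rotates the spectrum of `U` away from `-1`, so that its principal logarithm exists.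
  obtain ⟨z, hz, hzU⟩ := hinf.exists_notMem_finite (U : Matrix m m ℂ).finite_spectrum
  have hz1 : star z * z = 1 := by
    rw [Complex.star_def, Complex.conj_mul', mem_sphere_zero_iff_norm.mp hz]
    norm_num
  let ω : ℂˣ := ⟨-star z, -z, by rw [neg_mul_neg, hz1], by rw [neg_mul_neg, mul_comm, hz1]⟩
  have hω : star (-star z) * -star z = 1 := by rw [star_neg, star_star, neg_mul_neg, mul_comm, hz1]
  have hconj : ∀ A : Matrix m m ℂ, (-star z) • (U : Matrix m m ℂ) * A
      * star ((-star z) • (U : Matrix m m ℂ)) = U * A * star (U : Matrix m m ℂ) := fun A => by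
    rw [star_smul, smul_mul_assoc, smul_mul_smul_comm, mul_comm, hω, one_smul]
  let W : unitaryGroup m ℂ := ⟨(-star z) • (U : Matrix m m ℂ), mem_unitaryGroup_iff.mpr (by
    simpa using hconj 1)⟩
  have hW : ‖(W : Matrix m m ℂ) - 1‖ < 2 := by
    refine (Unitary.norm_sub_one_lt_two_iff W.2).mpr fun hmem => hzU ?_
    have hωz : ω • z = -1 := by
      change -star z * z = -1
      rw [neg_mul, hz1]
    refine (spectrum.smul_mem_smul_iff (r := ω)).mp ?_
    rw [hωz]
    exact hmem
  exact ⟨Unitary.argSelfAdjoint W, by rw [expUnitary_argSelfAdjoint hW]; exact hconj⟩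

lemma analyticAt_det {F : ℝ → Matrix m m ℂ} {t : ℝ} (hF : AnalyticAt ℝ F t) :
    AnalyticAt ℝ (fun t => (F t).det) t := by
  have hentry : ∀ i j, AnalyticAt ℝ (fun t => F t i j) t := fun i j =>
    ((entryLinearMap ℝ ℂ i j).toContinuousLinearMap.analyticAt (F t)).comp hF
  simp only [det_apply]
  exact Finset.analyticAt_fun_sum _ fun σ _ =>
    (Finset.analyticAt_fun_prod _ fun i _ => hentry (σ i) i).const_smul

lemma analyticAt_expUnitary_smul (h : selfAdjoint (Matrix m m ℂ)) (t : ℝ) :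
    AnalyticAt ℝ (fun t : ℝ => (expUnitary (t • h) : Matrix m m ℂ)) t := by
  simp only [expUnitary_coe, selfAdjoint.val_smul, smul_comm Complex.I]
  exact (NormedSpace.exp_analytic (𝕂 := ℝ) _).comp
    (f := fun t : ℝ => t • Complex.I • (h : Matrix m m ℂ)) (analyticAt_id.smul analyticAt_const)

lemma norm_sub_lt_two_iff {s t : Matrix m m ℂ} (hs : IsSymmetry s) (ht : IsSymmetry t) :
    ‖s - t‖ < 2 ↔ (s + t).det ≠ 0 := by
  have hmul : ∀ x : Matrix m m ℂ, x - t = (x * t - 1) * t := fun x => by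
    rw [sub_mul, Matrix.mul_assoc, ht.mul_self, Matrix.mul_one, Matrix.one_mul]
  have hadd : s + t = (s * t + 1) * t := by
    rw [add_mul, Matrix.mul_assoc, ht.mul_self, Matrix.mul_one, Matrix.one_mul]
  have hdet : t.det ≠ 0 := left_ne_zero_of_mul_eq_one
    ((det_mul t t).symm.trans ((congrArg det ht.mul_self).trans det_one))
  rw [hmul, CStarRing.norm_mul_mem_unitary _ ht.mem_unitary,
    Unitary.norm_sub_one_lt_two_iff (mul_mem hs.mem_unitary ht.mem_unitary), spectrum.notMem_iff,
    isUnit_iff_isUnit_det, isUnit_iff_ne_zero, hadd, det_mul, mul_ne_zero_iff_right hdet, map_neg,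
    map_one, ← neg_add', det_neg, add_comm]
  simp

variable {τ : ℂ}

lemma Symm.exists_analytic_path (s x : Symm m τ) : ∃ r : ℝ → Symm m τ, r 0 = s ∧ r 1 = x ∧
    ∀ t, AnalyticAt ℝ (fun t => (r t).1) t := by
  obtain ⟨U, hU⟩ := exists_unitary_conj_eq_of_charpoly_eq s.2.1.star_eq x.2.1.star_eq
    (s.2.1.charpoly_eq_of_trace_eq x.2.1 (s.2.2.trans x.2.2.symm))
  obtain ⟨h, hh⟩ := exists_selfAdjoint_conj_eq U
  refine ⟨fun t => ⟨expUnitary (t • h) * s.1 * star (expUnitary (t • h) : Matrix m m ℂ),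
    s.2.1.conj_unitary (expUnitary (t • h)), by
      rw [trace_mul_comm, ← Matrix.mul_assoc, Unitary.coe_star_mul_self, Matrix.one_mul, s.2.2]⟩,
    Subtype.ext (by simp), Subtype.ext (by simpa only [one_smul, hU] using hh s.1), fun t => ?_⟩
  have hexp := analyticAt_expUnitary_smul h t
  refine (hexp.mul analyticAt_const).mul ?_
  exact ((starL' ℝ : Matrix m m ℂ ≃L[ℝ] Matrix m m ℂ).toContinuousLinearMap.analyticAt _).comp hexp

lemma dense_setOf_norm_sub_lt_two (s : Symm m τ) : Dense {x : Symm m τ | ‖x.1 - s.1‖ < 2} := by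
  intro x
  obtain ⟨r, rfl, rfl, hr⟩ := s.exists_analytic_path x
  have hcont : Continuous r :=
    (continuous_iff_continuousAt.mpr fun t => (hr t).continuousAt).subtype_mk _
  have hfreq : ∃ᶠ t in 𝓝[≠] (1 : ℝ), ‖(r t).1 - (r 0).1‖ < 2 := by
    intro hnot
    have hdet : AnalyticOnNhd ℝ (fun t => ((r t).1 + (r 0).1).det) Set.univ := fun t _ =>
      analyticAt_det ((hr t).add analyticAt_const)
    have hzero := hdet.eqOn_zero_of_preconnected_of_frequently_eq_zero isPreconnected_univ
      (Set.mem_univ 1) (hnot.frequently.mono fun t ht => ?_) (Set.mem_univ 0)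
    · refine (norm_sub_lt_two_iff (r 0).2.1 (r 0).2.1).mp ?_ hzero
      rw [sub_self, norm_zero]
      exact two_pos
    · exact not_not.mp ((not_congr (norm_sub_lt_two_iff (r t).2.1 (r 0).2.1)).mp ht)
  exact mem_closure_of_frequently_of_tendsto hfreq
    ((hcont.tendsto 1).mono_left nhdsWithin_le_nhds)

instance : PreconnectedSpace (Symm m τ) where
  isPreconnected_univ := isPreconnected_of_forall_pair fun s _ x _ => by
    obtain ⟨r, rfl, rfl, hr⟩ := s.exists_analytic_path x
    exact ⟨Set.range r, Set.subset_univ _, Set.mem_range_self 0, Set.mem_range_self 1,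
      isPreconnected_range
        ((continuous_iff_continuousAt.mpr fun t => (hr t).continuousAt).subtype_mk _)⟩

theorem trace_map_mul_map {p : ℝ} (hp : 0 < p) {ψ : Equiv.Perm (Symm m τ)}
    (hψ : ψ ∈ isometryGroup m τ p) (s t : Symm m τ) :
    ((ψ t).1 * (ψ s).1).trace = (t.1 * s.1).trace := by
  have hψc := continuous_of_mem_isometryGroup hp hψ
  refine congrFun (Continuous.ext_on (dense_setOf_norm_sub_lt_two s) ?_ ?_ fun x hx =>
    trace_map_mul_map_of_norm_sub_lt_two hp hψ hx) t
  · exact ((continuous_subtype_val.comp hψc).matrix_mul continuous_const).matrix_trace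
  · exact (continuous_subtype_val.matrix_mul continuous_const).matrix_trace

end Density

section LinearExtension

lemma exists_linearMap_of_bilinear_eq {K V W ι : Type*} [Field K] [AddCommGroup V] [Module K V]
    [AddCommGroup W] [Module K W] {B : V →ₗ[K] V →ₗ[K] K} {B' : W →ₗ[K] W →ₗ[K] K}
    (hB' : B'.SeparatingLeft) {v : ι → V} {w : ι → W} (hv : Submodule.span K (Set.range v) = ⊤)
    (hw : Submodule.span K (Set.range w) = ⊤) (h : ∀ i j, B' (w i) (w j) = B (v i) (v j)) :
    ∃ Φ : V →ₗ[K] W, (∀ i, Φ (v i) = w i) ∧ ∀ x y, B' (Φ x) (Φ y) = B x y := by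
  let lv := Finsupp.linearCombination K v
  let lw := Finsupp.linearCombination K w
  have hform : ∀ a b, B' (lw a) (lw b) = B (lv a) (lv b) := by
    have : B'.compl₁₂ lw lw = B.compl₁₂ lv lv := by
      ext i j
      simp [lv, lw, h]
    exact fun a b => LinearMap.congr_fun₂ this a b
  obtain ⟨g, hg⟩ := lv.exists_rightInverse_of_surjective
    (by rw [Finsupp.range_linearCombination, hv])
  have hlv : ∀ x, lv (g x) = x := LinearMap.congr_fun hg
  refine ⟨lw ∘ₗ g, fun i => sub_eq_zero.mp (hB' _ fun y => ?_), fun x y => ?_⟩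
  · obtain ⟨b, rfl⟩ : y ∈ LinearMap.range lw := by rw [Finsupp.range_linearCombination, hw]; trivial
    have hwi : lw (Finsupp.single i 1) = w i := by simp [lw]
    have hvi : lv (Finsupp.single i 1) = v i := by simp [lv]
    rw [LinearMap.comp_apply, ← hwi, ← map_sub, hform, map_sub, hlv, hvi, sub_self, map_zero,
      LinearMap.zero_apply]
  · rw [LinearMap.comp_apply, LinearMap.comp_apply, hform, hlv, hlv]

variable {m : Type*} [Fintype m]

lemma sum_ite_mem_one_neg_one {R : Type*} [Ring R] {n : ℕ} (hm : Fintype.card m = 2 * n)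
    [DecidableEq m] {F : Finset m} (hF : F.card = n) :
    ∑ i, (if i ∈ F then 1 else -1 : R) = 0 := by
  rw [← Finset.sum_add_sum_compl F, Finset.sum_ite_of_true fun _ h => h,
    Finset.sum_ite_of_false fun _ h => Finset.mem_compl.mp h, Finset.sum_const, Finset.sum_const,
    Finset.card_compl, hF, hm, two_mul, Nat.add_sub_cancel, smul_neg, add_neg_cancel]

lemma exists_balanced_signs {n : ℕ} (hm : Fintype.card m = 2 * n) {i j : m} (hij : i ≠ j) :
    ∃ ε : m → ℂ, (∀ k, ε k = 1 ∨ ε k = -1) ∧ ∑ k, ε k = 0 ∧ ε i = 1 ∧ ε j = -1 := by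
  classical
  have hn : 1 ≤ n := by have := Fintype.card_pos_iff.mpr ⟨i⟩; omega
  obtain ⟨F, hiF, hFj, hF⟩ := Finset.exists_subsuperset_card_eq (s := {i}) (t := {j}ᶜ) (n := n)
    (by simpa using hij.symm) (by simpa using hn)
    (by rw [Finset.card_compl, Finset.card_singleton]; omega)
  exact ⟨fun k => if k ∈ F then 1 else -1, fun k => by grind, sum_ite_mem_one_neg_one hm hF,
    if_pos (Finset.singleton_subset_iff.mp hiF),
    if_neg fun hj => Finset.mem_compl.mp (hFj hj) (Finset.mem_singleton_self j)⟩

lemma span_signs_eq_top {n : ℕ} (hm : Fintype.card m = 2 * n) :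
    Submodule.span ℂ (insert 1 {ε : m → ℂ | (∀ i, ε i = 1 ∨ ε i = -1) ∧ ∑ i, ε i = 0}) = ⊤ := by
  classical
  set S := Submodule.span ℂ (insert 1 {ε : m → ℂ | (∀ i, ε i = 1 ∨ ε i = -1) ∧ ∑ i, ε i = 0})
  have hdiff : ∀ i j : m, Pi.single i 1 - Pi.single j 1 ∈ S := by
    intro i j
    obtain rfl | hij := eq_or_ne i j
    · simp
    obtain ⟨ε, hε, hsum, hi, hj⟩ := exists_balanced_signs hm hij
    have hswap : ε ∘ Equiv.swap i j ∈ S := Submodule.subset_span <| Or.inr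
      ⟨fun k => hε _, (Equiv.sum_comp (Equiv.swap i j) ε).trans hsum⟩
    have hεS : ε ∈ S := Submodule.subset_span (Or.inr ⟨hε, hsum⟩)
    convert S.smul_mem (1 / 2) (S.sub_mem hεS hswap) using 1
    ext k
    simp only [Pi.sub_apply, Pi.single_apply, Pi.smul_apply, Function.comp_apply,
      Equiv.swap_apply_def, smul_eq_mul]
    split_ifs <;> grind
  refine eq_top_iff.mpr fun x _ => ?_
  rw [pi_eq_sum_univ' x]
  refine S.sum_mem fun i _ => S.smul_mem _ ?_
  have hcard : (Fintype.card m : ℂ) ≠ 0 := Nat.cast_ne_zero.mpr (Fintype.card_pos_iff.mpr ⟨i⟩).ne'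
  have hone : (1 : m → ℂ) ∈ S := Submodule.subset_span (Or.inl rfl)
  convert S.smul_mem (Fintype.card m : ℂ)⁻¹ (S.add_mem hone (S.sum_mem fun j _ => hdiff i j))
  rw [eq_inv_smul_iff₀ hcard, Finset.sum_sub_distrib, Finset.univ_sum_single, ← Pi.one_def,
    add_sub_cancel, Finset.sum_const, Finset.card_univ, Nat.cast_smul_eq_nsmul]

variable [DecidableEq m]

lemma isSymmetry_conjDiag (V : unitaryGroup m ℂ) {ε : m → ℂ} (hε : ∀ i, ε i = 1 ∨ ε i = -1) :
    IsSymmetry (conjDiag V ε) where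
  star_eq := by
    rw [← map_star]
    congr 1 with i
    obtain h | h := hε i <;> simp [h]
  mul_self := by
    rw [← map_mul, ← map_one (conjDiag V)]
    congr 1 with i
    obtain h | h := hε i <;> simp [h]

lemma span_symmetries_eq_top {n : ℕ} (hm : Fintype.card m = 2 * n) :
    Submodule.span ℂ (insert 1 {s : Matrix m m ℂ | IsSymmetry s ∧ s.trace = 0}) = ⊤ := by
  rw [eq_top_iff, ← span_selfAdjoint, Submodule.span_le]
  intro A hA
  obtain ⟨V, a, rfl⟩ := exists_conjDiag (show A.IsHermitian from hA)
  have ha : (fun i => (a i : ℂ)) ∈ Submodule.span ℂ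
      (insert 1 {ε : m → ℂ | (∀ i, ε i = 1 ∨ ε i = -1) ∧ ∑ i, ε i = 0}) :=
    span_signs_eq_top hm ▸ Submodule.mem_top
  have hmap := Submodule.mem_map_of_mem (f := (conjDiag V).toAlgHom.toLinearMap) ha
  rw [Submodule.map_span] at hmap
  refine Submodule.span_mono ?_ hmap
  rintro _ ⟨ε, rfl | ⟨hε, hsum⟩, rfl⟩
  · exact Or.inl (map_one (conjDiag V))
  · exact Or.inr ⟨isSymmetry_conjDiag V hε, (trace_conjDiag V ε).trans hsum⟩

/-- Unital, star-preserving linear maps preserving the trace form `(X, Y) ↦ Tr (X Y)`. -/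
structure IsTraceIsometry (Φ : Matrix m m ℂ →ₗ[ℂ] Matrix m m ℂ) : Prop where
  protected map_one : Φ 1 = 1
  protected map_star : ∀ X, Φ (star X) = star (Φ X)
  trace_map_mul_map : ∀ X Y, (Φ X * Φ Y).trace = (X * Y).trace

lemma exists_isTraceIsometry {n : ℕ} (hm : Fintype.card m = 2 * n) {ψ : Equiv.Perm (Symm m 0)}
    (hψ : ∀ s t, ((ψ s).1 * (ψ t).1).trace = (s.1 * t.1).trace) :
    ∃ Φ, IsTraceIsometry Φ ∧ ∀ s : Symm m 0, Φ s.1 = (ψ s).1 := by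
  let B := (LinearMap.mul ℂ (Matrix m m ℂ)).compr₂ (traceLinearMap m ℂ ℂ)
  have hB : B.SeparatingLeft := fun X hX => ext_iff_trace_mul_right.mpr fun Y => by
    rw [Matrix.zero_mul, trace_zero]
    exact hX Y
  let v : Option (Symm m 0) → Matrix m m ℂ := fun o => o.elim 1 Subtype.val
  have hv : Submodule.span ℂ (Set.range v) = ⊤ := by
    rw [← span_symmetries_eq_top hm, Option.range_eq]
    exact congrArg (fun S => Submodule.span ℂ (insert 1 S)) Subtype.range_coe
  have hw : Submodule.span ℂ (Set.range (v ∘ Equiv.optionCongr ψ)) = ⊤ := by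
    rw [(Equiv.optionCongr ψ).surjective.range_comp, hv]
  have hstar : ∀ o, star (v o) = v o
    | none => star_one _
    | some s => s.2.1.star_eq
  have hform : ∀ i j, B (v (Equiv.optionCongr ψ i)) (v (Equiv.optionCongr ψ j)) = B (v i) (v j)
    | none, none => rfl
    | none, some t => by simp [B, v, t.2.2, (ψ t).2.2]
    | some s, none => by simp [B, v, s.2.2, (ψ s).2.2]
    | some s, some t => hψ s t
  obtain ⟨Φ, hΦ, htr⟩ := exists_linearMap_of_bilinear_eq hB hv hw hform
  refine ⟨Φ, ⟨hΦ none, fun X => ?_, htr⟩, fun s => hΦ (some s)⟩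
  have hX : X ∈ Submodule.span ℂ (Set.range v) := hv ▸ Submodule.mem_top
  induction hX using Submodule.span_induction with
  | mem X hX =>
    obtain ⟨o, rfl⟩ := hX
    rw [hstar, hΦ]
    exact (hstar _).symm
  | zero => simp
  | add X Y _ _ hX hY => rw [star_add, map_add, hX, hY, map_add, star_add]
  | smul c X _ hX => rw [star_smul, map_smul, hX, map_smul, star_smul]

end LinearExtension

section Dichotomy

variable {m : Type*} [Fintype m] {n : ℕ}

lemma two_mul_sum_sq_le (z : m → ℝ) : 2 * ∑ i, z i ^ 2 ≤ (∑ i, |z i|) ^ 2 + (∑ i, z i) ^ 2 := by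
  have hexpand : (∑ i, |z i|) ^ 2 + (∑ i, z i) ^ 2 = ∑ i, ∑ j, (|z i * z j| + z i * z j) := by
    simp only [sq, Finset.sum_mul_sum, Finset.sum_add_distrib, abs_mul]
  rw [hexpand, Finset.mul_sum]
  refine Finset.sum_le_sum fun i _ => ?_
  calc 2 * z i ^ 2 = |z i * z i| + z i * z i := by rw [abs_mul_self]; ring
    _ ≤ _ := Finset.single_le_sum (f := fun j => |z i * z j| + z i * z j)
      (fun j _ => by linarith [neg_abs_le (z i * z j)]) (Finset.mem_univ i)

lemma exists_median (hm : Fintype.card m = 2 * n) (hn : 0 < n) (x : m → ℝ) :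
    ∃ (c : ℝ) (ε : m → ℝ), (∀ i, ε i = 1 ∨ ε i = -1) ∧ ∑ i, ε i = 0 ∧
      ∀ i, |x i - c| = ε i * (x i - c) := by
  classical
  obtain ⟨F, hF, hmax⟩ := (Finset.powersetCard n (Finset.univ : Finset m)).exists_max_image
    (fun F => ∑ i ∈ F, x i) (Finset.powersetCard_nonempty.mpr (by rw [Finset.card_univ]; omega))
  have hcard : F.card = n := (Finset.mem_powersetCard.mp hF).2
  obtain ⟨k, hk, hmin⟩ := F.exists_min_image x (Finset.card_pos.mp (hcard ▸ hn))
  have hout : ∀ i ∉ F, x i ≤ x k := by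
    intro i hi
    have hi' : i ∉ F.erase k := fun h => hi (Finset.mem_of_mem_erase h)
    have hswap := hmax (insert i (F.erase k)) <| Finset.mem_powersetCard_univ.mpr <| by
      rw [Finset.card_insert_of_notMem hi', Finset.card_erase_add_one hk, hcard]
    rw [Finset.sum_insert hi', ← Finset.add_sum_erase F x hk] at hswap
    linarith
  refine ⟨x k, fun i => if i ∈ F then 1 else -1, fun i => by grind,
    sum_ite_mem_one_neg_one hm hcard, fun i => ?_⟩
  change |x i - x k| = (if i ∈ F then 1 else -1) * (x i - x k)
  split_ifs with hi
  · rw [one_mul, abs_of_nonneg (sub_nonneg.mpr (hmin i hi))]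
  · rw [neg_one_mul, abs_of_nonpos (sub_nonpos.mpr (hout i hi))]

lemma isIdempotentElem_of_sum_eq_one {x : m → ℝ} (habs : ∑ i, |x i| ≤ 1) (hsum : ∑ i, x i = 1)
    (hsq : ∑ i, x i ^ 2 = 1) : IsIdempotentElem x := by
  have hnonneg : ∀ i, 0 ≤ x i := by
    have h : ∑ i, (|x i| - x i) ≤ 0 := by rw [Finset.sum_sub_distrib, hsum]; linarith
    intro i
    have := (Finset.single_le_sum (fun j _ => sub_nonneg.mpr (le_abs_self (x j)))
      (Finset.mem_univ i)).trans h
    exact abs_nonneg (x i) |>.trans (sub_nonpos.mp this)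
  have hle : ∀ i, x i ≤ 1 := fun i =>
    hsum ▸ Finset.single_le_sum (fun j _ => hnonneg j) (Finset.mem_univ i)
  have hzero : ∑ i, x i * (1 - x i) = 0 := by
    simp only [mul_sub, mul_one, ← sq, Finset.sum_sub_distrib, hsum, hsq, sub_self]
  rw [Finset.sum_eq_zero_iff_of_nonneg fun i _ => mul_nonneg (hnonneg i) (sub_nonneg.mpr (hle i))]
    at hzero
  funext i
  rw [Pi.mul_apply]
  linear_combination -hzero i (Finset.mem_univ i)

lemma eq_zero_or_eq_inv_of_sum_abs_sub_le (hm : Fintype.card m = 2 * n) (hn : 2 ≤ n) {x : m → ℝ}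
    {c : ℝ} (hsum : ∑ i, x i = 1) (hsq : ∑ i, x i ^ 2 = 1) (habs : ∑ i, |x i - c| ≤ 1) :
    c = 0 ∨ c = (n : ℝ)⁻¹ := by
  have hn' : (2 : ℝ) ≤ n := by exact_mod_cast hn
  have hzsum : ∑ i, (x i - c) = 1 - 2 * n * c := by simp [hsum, hm]
  have hzsq : ∑ i, (x i - c) ^ 2 = 1 - 2 * c + 2 * n * c ^ 2 := by
    simp only [sub_sq, Finset.sum_add_distrib, Finset.sum_sub_distrib, hsq, mul_assoc,
      ← Finset.mul_sum, ← Finset.sum_mul, hsum, Finset.sum_const, Finset.card_univ, hm]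
    ring
  have hbound := two_mul_sum_sq_le fun i => x i - c
  have habs0 : 0 ≤ ∑ i, |x i - c| := Finset.sum_nonneg fun i _ => abs_nonneg _
  have hzabs : |1 - 2 * n * c| ≤ 1 := hzsum ▸ (Finset.abs_sum_le_sum_abs _ _).trans habs
  rw [hzsum, hzsq] at hbound
  have hc0 : 0 ≤ c := by nlinarith [abs_le.mp hzabs]
  have hc1 : n * c ≤ 1 := by linarith [abs_le.mp hzabs]
  have hc : c * (1 - n * c) = 0 := le_antisymm (by nlinarith) (mul_nonneg hc0 (by linarith))
  refine (mul_eq_zero.mp hc).imp id fun h => eq_inv_of_mul_eq_one_right ?_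
  linarith

lemma isIdempotentElem_or_inv_sub (hm : Fintype.card m = 2 * n) (hn : 2 ≤ n) {x : m → ℝ}
    (hsum : ∑ i, x i = 1) (hsq : ∑ i, x i ^ 2 = 1)
    (hsigns : ∀ ε : m → ℝ, (∀ i, ε i = 1 ∨ ε i = -1) → ∑ i, ε i = 0 → ∑ i, x i * ε i ≤ 1) :
    IsIdempotentElem x ∨ IsIdempotentElem (fun i => (n : ℝ)⁻¹ - x i) := by
  obtain ⟨c, ε, hε, hε0, hxc⟩ := exists_median hm (by omega) x
  have habs : ∑ i, |x i - c| ≤ 1 := by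
    calc ∑ i, |x i - c| = ∑ i, x i * ε i - c * ∑ i, ε i := by
          rw [Finset.mul_sum, ← Finset.sum_sub_distrib]
          exact Finset.sum_congr rfl fun i _ => by rw [hxc]; ring
      _ ≤ 1 := by rw [hε0, mul_zero, sub_zero]; exact hsigns ε hε hε0
  obtain rfl | rfl := eq_zero_or_eq_inv_of_sum_abs_sub_le hm hn hsum hsq habs
  · exact Or.inl (isIdempotentElem_of_sum_eq_one (by simpa using habs) hsum hsq)
  · refine Or.inr (isIdempotentElem_of_sum_eq_one (by simpa only [abs_sub_comm] using habs) ?_ ?_)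
    · simp only [Finset.sum_sub_distrib, hsum, Finset.sum_const, Finset.card_univ, hm,
        nsmul_eq_mul]
      push_cast
      field_simp
      norm_num
    · simp only [sub_sq, Finset.sum_add_distrib, Finset.sum_sub_distrib, hsq,
        ← Finset.mul_sum, hsum, Finset.sum_const, Finset.card_univ, hm, nsmul_eq_mul]
      push_cast
      field_simp
      ring

lemma isIdempotentElem_of_card_eq_two (hm : Fintype.card m = 2) {x : m → ℝ}
    (hsum : ∑ i, x i = 1) (hsq : ∑ i, x i ^ 2 = 1) : IsIdempotentElem x := by
  classical
  funext i
  obtain ⟨j, hj⟩ := Finset.card_eq_one.mp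
    (show (Finset.univ.erase i).card = 1 by
      rw [Finset.card_erase_of_mem (Finset.mem_univ i), Finset.card_univ, hm])
  rw [← Finset.add_sum_erase _ _ (Finset.mem_univ i), hj, Finset.sum_singleton] at hsum hsq
  rw [eq_sub_of_add_eq' hsum] at hsq
  rw [Pi.mul_apply]
  linear_combination hsq / 2

end Dichotomy

section RankOne

variable {m : Type*} [Fintype m] [DecidableEq m] {Φ : Matrix m m ℂ →ₗ[ℂ] Matrix m m ℂ} {n : ℕ}

omit [DecidableEq m] in
lemma trace_conjTranspose_mul_self_of_isStarProjection {P Q : Matrix m m ℂ}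
    (hP : IsStarProjection P) (hQ : IsStarProjection Q) :
    ((P * Q)ᴴ * (P * Q)).trace = (P * Q).trace := by
  rw [conjTranspose_mul, ← star_eq_conjTranspose, ← star_eq_conjTranspose,
    hP.isSelfAdjoint.star_eq, hQ.isSelfAdjoint.star_eq, Matrix.mul_assoc, trace_mul_comm,
    ← Matrix.mul_assoc P, hP.isIdempotentElem.eq, Matrix.mul_assoc, hQ.isIdempotentElem.eq]

lemma trace_mul_le_one {E s : Matrix m m ℂ} (hE : IsStarProjection E) (htr : E.trace = 1)
    (hs : IsSymmetry s) : (s * E).trace ≤ 1 := by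
  have h := (posSemidef_conjTranspose_mul_self ((2⁻¹ : ℂ) • (1 + -s) * E)).trace_nonneg
  rw [trace_conjTranspose_mul_self_of_isStarProjection hs.neg.isStarProjection hE, smul_mul_assoc,
    trace_smul, add_mul, Matrix.one_mul, trace_add, htr, neg_mul, trace_neg, smul_eq_mul,
    ← sub_eq_add_neg] at h
  have h' := mul_nonneg (zero_le_two (α := ℂ)) h
  rw [mul_inv_cancel_left₀ two_ne_zero] at h'
  exact sub_nonneg.mp h'

lemma isIdempotentElem_conjDiag (V : unitaryGroup m ℂ) {x : m → ℝ} (hx : IsIdempotentElem x) :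
    IsIdempotentElem (conjDiag V fun i => (x i : ℂ)) :=
  (hx.map (Complex.ofRealHom.compLeft m)).map (conjDiag V)

namespace IsTraceIsometry

variable (hΦ : IsTraceIsometry Φ)
include hΦ

lemma trace_map (X : Matrix m m ℂ) : (Φ X).trace = X.trace := by
  simpa [hΦ.map_one] using hΦ.trace_map_mul_map X 1

lemma surjective : Function.Surjective Φ := by
  refine LinearMap.injective_iff_surjective.mp <| (injective_iff_map_eq_zero Φ).mpr fun X hX => ?_
  refine ext_iff_trace_mul_right.mpr fun Y => ?_
  rw [← hΦ.trace_map_mul_map, hX, Matrix.zero_mul, Matrix.zero_mul]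

end IsTraceIsometry

/-- The linear map `X ↦ (Tr X / n) • 1 - Φ X`; for `|m| = 2n` it agrees with `-Φ` on traceless
matrices, so that it corresponds to replacing `φ` with `1 - φ`. -/
noncomputable def complement (n : ℕ) (Φ : Matrix m m ℂ →ₗ[ℂ] Matrix m m ℂ) :
    Matrix m m ℂ →ₗ[ℂ] Matrix m m ℂ :=
  (n : ℂ)⁻¹ • (traceLinearMap m ℂ ℂ).smulRight 1 - Φ

lemma complement_apply (X : Matrix m m ℂ) :
    complement n Φ X = ((n : ℂ)⁻¹ * X.trace) • 1 - Φ X := by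
  simp [complement, mul_smul]

lemma isTraceIsometry_complement (hm : Fintype.card m = 2 * n) (hn : n ≠ 0)
    (hΦ : IsTraceIsometry Φ) : IsTraceIsometry (complement n Φ) := by
  have hn' : (n : ℂ) ≠ 0 := Nat.cast_ne_zero.mpr hn
  refine ⟨?_, fun X => ?_, fun X Y => ?_⟩
  · rw [complement_apply, hΦ.map_one, trace_one, hm]
    push_cast
    rw [mul_left_comm, inv_mul_cancel₀ hn', mul_one, two_smul, add_sub_cancel_right]
  · rw [complement_apply, hΦ.map_star, complement_apply]
    simp [star_eq_conjTranspose, trace_conjTranspose]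
  · simp only [complement_apply, sub_mul, mul_sub, trace_sub, smul_mul_assoc, mul_smul_comm,
      Matrix.one_mul, Matrix.mul_one, trace_smul, trace_one, hm, hΦ.trace_map_mul_map,
      hΦ.trace_map, smul_eq_mul]
    push_cast
    field_simp
    ring

namespace IsTraceIsometry

variable (hΦ : IsTraceIsometry Φ) {E : Matrix m m ℂ} (hE : IsStarProjection E) (htr : E.trace = 1)
include hΦ hE htr

lemma exists_map_eq_conjDiag : ∃ (V : unitaryGroup m ℂ) (x : m → ℝ),
    Φ E = conjDiag V (fun i => (x i : ℂ)) ∧ ∑ i, x i = 1 ∧ ∑ i, x i ^ 2 = 1 := by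
  obtain ⟨V, x, hx⟩ := exists_conjDiag (show (Φ E).IsHermitian by
    rw [IsHermitian, ← star_eq_conjTranspose, ← hΦ.map_star, hE.isSelfAdjoint.star_eq])
  have hsum := hΦ.trace_map E
  have hsq := hΦ.trace_map_mul_map E E
  rw [htr, hx, trace_conjDiag] at hsum
  rw [hE.isIdempotentElem.eq, htr, hx, ← map_mul, trace_conjDiag] at hsq
  simp only [Pi.mul_apply, ← sq] at hsq
  exact ⟨V, x, hx, by exact_mod_cast hsum, by exact_mod_cast hsq⟩

lemma isIdempotentElem_map_of_card_eq_two (hm : Fintype.card m = 2) :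
    IsIdempotentElem (Φ E) := by
  obtain ⟨V, x, hx, hsum, hsq⟩ := hΦ.exists_map_eq_conjDiag hE htr
  rw [hx]
  exact isIdempotentElem_conjDiag V (isIdempotentElem_of_card_eq_two hm hsum hsq)

lemma isIdempotentElem_map_or_complement (hm : Fintype.card m = 2 * n) (hn : 2 ≤ n)
    {ψ : Equiv.Perm (Symm m 0)} (hψ : ∀ s, Φ s.1 = (ψ s).1) :
    IsIdempotentElem (Φ E) ∨ IsIdempotentElem (complement n Φ E) := by
  obtain ⟨V, x, hx, hsum, hsq⟩ := hΦ.exists_map_eq_conjDiag hE htr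
  have hsigns : ∀ ε : m → ℝ, (∀ i, ε i = 1 ∨ ε i = -1) → ∑ i, ε i = 0 → ∑ i, x i * ε i ≤ 1 := by
    intro ε hε hε0
    let s : Symm m 0 := ⟨conjDiag V fun i => (ε i : ℂ),
      isSymmetry_conjDiag V fun i => by exact_mod_cast hε i,
      (trace_conjDiag V _).trans (by exact_mod_cast hε0)⟩
    have h := trace_mul_le_one hE htr (ψ.symm s).2.1
    rw [trace_mul_comm, ← hΦ.trace_map_mul_map, hψ, ψ.apply_symm_apply, hx, ← map_mul,
      trace_conjDiag] at h
    simp only [Pi.mul_apply] at h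
    exact_mod_cast h
  have hcompl : complement n Φ E = conjDiag V fun i => (((n : ℝ)⁻¹ - x i : ℝ) : ℂ) := by
    rw [complement_apply, htr, mul_one, hx, ← map_one (conjDiag V), ← map_smul, ← map_sub]
    congr 1 with i
    simp
  rw [hcompl, hx]
  exact (isIdempotentElem_or_inv_sub hm hn hsum hsq hsigns).imp (isIdempotentElem_conjDiag V)
    (isIdempotentElem_conjDiag V)

omit hE in
lemma not_isIdempotentElem_complement (hn : 2 ≤ n) (h : IsIdempotentElem (Φ E)) :
    ¬ IsIdempotentElem (complement n Φ E) := by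
  intro hc
  have htr' : (Φ E).trace = 1 := (hΦ.trace_map E).trans htr
  have hmul : complement n Φ E * Φ E = ((n : ℂ)⁻¹ - 1) • Φ E := by
    rw [complement_apply, htr, mul_one, sub_mul, smul_mul_assoc, Matrix.one_mul, h.eq, sub_smul,
      one_smul]
  have hprod : ((n : ℂ)⁻¹ - 1) * ((n : ℂ)⁻¹ - 2) = 0 := by
    have := congrArg (fun X => (X * Φ E).trace) hc.eq
    simp only [Matrix.mul_assoc, hmul, mul_smul_comm, trace_smul, htr', smul_eq_mul] at this
    linear_combination this
  have hn0 : (n : ℂ) ≠ 0 := Nat.cast_ne_zero.mpr (by omega)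
  rcases mul_eq_zero.mp hprod with hone | htwo
  · have hn1 : (n : ℂ) = 1 := inv_eq_one.mp (sub_eq_zero.mp hone)
    norm_cast at hn1
    omega
  · have hn1 : 2 * (n : ℂ) = 1 := sub_eq_zero.mp htwo ▸ inv_mul_cancel₀ hn0
    norm_cast at hn1
    omega

omit hE htr in
theorem forall_isIdempotentElem_map_or_complement (hm : Fintype.card m = 2 * n) (hn : n ≠ 0)
    {ψ : Equiv.Perm (Symm m 0)} (hψ : ∀ s, Φ s.1 = (ψ s).1) :
    (∀ E, IsStarProjection E → E.trace = 1 → IsIdempotentElem (Φ E)) ∨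
      ∀ E, IsStarProjection E → E.trace = 1 → IsIdempotentElem (complement n Φ E) := by
  obtain rfl | hn := eq_or_ne n 1
  · exact Or.inl fun E hE htr => hΦ.isIdempotentElem_map_of_card_eq_two hE htr hm
  replace hn : 2 ≤ n := by omega
  let e : Symm m (2 - Fintype.card m) → Matrix m m ℂ := fun s => (2⁻¹ : ℂ) • (1 + s.1)
  have he : ∀ s, IsStarProjection (e s) := fun s => s.2.1.isStarProjection
  have hetr : ∀ s, (e s).trace = 1 := fun s => by
    rw [trace_smul, trace_add, trace_one, s.2.2, add_sub_cancel, smul_eq_mul,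
      inv_mul_cancel₀ two_ne_zero]
  have hsurj : ∀ E, IsStarProjection E → E.trace = 1 → ∃ s, e s = E := fun E hE htr =>
    ⟨⟨_, isSymmetry_two_smul_sub_one hE, by simp [htr]⟩, by
      simp only [e, add_sub_cancel, inv_smul_smul₀ (two_ne_zero' ℂ)]⟩
  have hclosed : ∀ Ψ : Matrix m m ℂ →ₗ[ℂ] Matrix m m ℂ,
      IsClosed {s | IsIdempotentElem (Ψ (e s))} := fun Ψ => by
    have he : Continuous e := by fun_prop
    have hcont := Ψ.continuous_of_finiteDimensional.comp he
    exact isClosed_eq (hcont.matrix_mul hcont) hcont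
  refine (isPreconnected_iff_subset_of_disjoint_closed.mp isPreconnected_univ
    _ _ (hclosed Φ) (hclosed (complement n Φ)) (fun s _ => ?_) ?_).imp (fun h E hE htr => ?_)
    fun h E hE htr => ?_
  · exact hΦ.isIdempotentElem_map_or_complement (he s) (hetr s) hm hn hψ
  · rw [Set.univ_inter]
    exact Set.disjoint_iff_inter_eq_empty.mp <| Set.disjoint_left.mpr fun s h =>
      hΦ.not_isIdempotentElem_complement (hetr s) hn h
  all_goals
    obtain ⟨s, rfl⟩ := hsurj E hE htr
    exact h (Set.mem_univ s)

end IsTraceIsometry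

end RankOne

section JordanHom

variable {R S : Type*} [Ring R] [Ring S]

/-- Jordan homomorphisms of rings: additive maps preserving the Jordan product `a * b + b * a`. -/
structure IsJordanHom (f : R →+ S) : Prop where
  map_mul_add_mul : ∀ a b, f (a * b + b * a) = f a * f b + f b * f a

namespace IsJordanHom

variable [IsAddTorsionFree S] {f : R →+ S} (hf : IsJordanHom f)
include hf

lemma map_mul_self (a : R) : f (a * a) = f a * f a := by
  have h := hf.map_mul_add_mul a a
  rw [map_add, ← two_nsmul, ← two_nsmul] at h
  exact nsmul_right_injective two_ne_zero h

lemma map_mul_mul_self (a b : R) : f (a * b * a) = f a * f b * f a := by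
  refine nsmul_right_injective two_ne_zero ?_
  dsimp only
  have hab : 2 • (a * b * a)
      = a * (a * b + b * a) + (a * b + b * a) * a - (a * a * b + b * (a * a)) := by noncomm_ring
  rw [← map_nsmul, hab, map_sub, hf.map_mul_add_mul, hf.map_mul_add_mul, hf.map_mul_add_mul,
    hf.map_mul_self]
  noncomm_ring

lemma map_mul_mul_add (a b c : R) :
    f (a * b * c + c * b * a) = f a * f b * f c + f c * f b * f a := by
  have habc : a * b * c + c * b * a
      = (a + c) * b * (a + c) - a * b * a - c * b * c := by noncomm_ring
  rw [habc, map_sub, map_sub, hf.map_mul_mul_self, hf.map_mul_mul_self, hf.map_mul_mul_self,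
    map_add]
  noncomm_ring

lemma defect_mul_antidefect (a b r : R) :
    (f (a * b) - f a * f b) * f r * (f (a * b) - f b * f a)
      + (f (a * b) - f b * f a) * f r * (f (a * b) - f a * f b) = 0 := by
  have hba : f (b * a) = f a * f b + f b * f a - f (a * b) := by
    rw [← hf.map_mul_add_mul, map_add, add_sub_cancel_left]
  have h := hf.map_mul_mul_add (a * b) r (b * a)
  have hw : a * b * r * (b * a) + b * a * r * (a * b)
      = a * (b * r * b) * a + b * (a * r * a) * b := by noncomm_ring
  rw [hw, map_add, hf.map_mul_mul_self, hf.map_mul_mul_self, hf.map_mul_mul_self,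
    hf.map_mul_mul_self, hba] at h
  linear_combination (norm := noncomm_ring) h

end IsJordanHom

lemma eq_zero_or_eq_zero_of_mul_mul_add_mul_mul_eq_zero [IsAddTorsionFree S]
    (hS : ∀ x y : S, (∀ r, x * r * y = 0) → x = 0 ∨ y = 0) {x y : S}
    (h : ∀ r, x * r * y + y * r * x = 0) : x = 0 ∨ y = 0 := by
  refine hS x y fun r => (or_self_iff).mp <| hS _ _ fun s => ?_
  have hyx : ∀ r, y * r * x = -(x * r * y) := fun r => eq_neg_of_add_eq_zero_right (h r)
  refine self_eq_neg.mp ?_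
  calc x * r * y * s * (x * r * y) = x * r * (y * s * x) * r * y := by simp only [mul_assoc]
    _ = -(x * (r * x * s) * y) * r * y := by rw [hyx]; noncomm_ring
    _ = y * (r * x * s) * x * r * y := by rw [hyx]
    _ = y * r * x * s * (x * r * y) := by simp only [mul_assoc]
    _ = -(x * r * y * s * (x * r * y)) := by rw [hyx]; noncomm_ring

lemma addMonoidHom_eq_zero_or_eq_zero {G H : Type*} [AddGroup G] [AddCommGroup H] {f g : G →+ H}
    (h : ∀ x, f x = 0 ∨ g x = 0) : f = 0 ∨ g = 0 := by
  by_contra! hfg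
  obtain ⟨x, hx⟩ := DFunLike.exists_ne hfg.1
  obtain ⟨y, hy⟩ := DFunLike.exists_ne hfg.2
  have hgx := (h x).resolve_left hx
  have hfy := (h y).resolve_right hy
  rcases h (x + y) with hxy | hxy
  · exact hx (by simpa [hfy] using hxy)
  · exact hy (by simpa [hgx] using hxy)

theorem IsJordanHom.map_mul_or_map_mul [IsAddTorsionFree S] {f : R →+ S}
    (hf : IsJordanHom f) (hsurj : Function.Surjective f)
    (hS : ∀ x y : S, (∀ r, x * r * y = 0) → x = 0 ∨ y = 0) :
    (∀ a b, f (a * b) = f a * f b) ∨ ∀ a b, f (a * b) = f b * f a := by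
  let X : R →+ R →+ S := AddMonoidHom.mul.compr₂ f - (AddMonoidHom.mul.comp f).compl₂ f
  let Y : R →+ R →+ S :=
    AddMonoidHom.mul.compr₂ f - (AddMonoidHom.mul.flip.comp f).compl₂ f
  have hXY : ∀ a b, X a b = 0 ∨ Y a b = 0 := fun a b =>
    eq_zero_or_eq_zero_of_mul_mul_add_mul_mul_eq_zero hS fun r => by
      obtain ⟨r, rfl⟩ := hsurj r
      exact hf.defect_mul_antidefect a b r
  refine (addMonoidHom_eq_zero_or_eq_zero fun a =>
    addMonoidHom_eq_zero_or_eq_zero (hXY a)).imp (fun h a b => ?_) fun h a b => ?_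
  · exact sub_eq_zero.mp (DFunLike.congr_fun (DFunLike.congr_fun h a) b)
  · exact sub_eq_zero.mp (DFunLike.congr_fun (DFunLike.congr_fun h a) b)

end JordanHom

section JordanDichotomy

variable {m : Type*} [Fintype m] [DecidableEq m]

omit [DecidableEq m] in
lemma matrix_eq_zero_or_eq_zero_of_forall_mul_mul_eq_zero {R : Type*} [Ring R] [NoZeroDivisors R]
    (X Y : Matrix m m R) (h : ∀ Z, X * Z * Y = 0) : X = 0 ∨ Y = 0 := by
  classical
  by_contra! hXY
  obtain ⟨i, j, hij⟩ : ∃ i j, X i j ≠ 0 := by simpa [← Matrix.ext_iff] using hXY.1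
  obtain ⟨k, l, hkl⟩ : ∃ k l, Y k l ≠ 0 := by simpa [← Matrix.ext_iff] using hXY.2
  have hentry : (X * single j k (1 : R) * Y) i l = X i j * Y k l := by
    simp [Matrix.mul_apply, single, ite_and]
  rw [h] at hentry
  exact mul_ne_zero hij hkl hentry.symm

lemma isStarProjection_conjDiag_single (V : unitaryGroup m ℂ) (i : m) :
    IsStarProjection (conjDiag V (Pi.single i 1)) where
  isIdempotentElem := ((CompleteOrthogonalIdempotents.single fun _ => ℂ).idem i).map (conjDiag V)
  isSelfAdjoint := by rw [isSelfAdjoint_iff, ← map_star, ← Pi.single_star, star_one]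

instance : IsAddTorsionFree (Matrix m m ℂ) := inferInstanceAs (IsAddTorsionFree (m → m → ℂ))

namespace IsTraceIsometry

variable {Φ : Matrix m m ℂ →ₗ[ℂ] Matrix m m ℂ} (hΦ : IsTraceIsometry Φ)
  (hidem : ∀ E, IsStarProjection E → E.trace = 1 → IsIdempotentElem (Φ E))
include hΦ hidem

lemma map_conjDiag_single_mul (V : unitaryGroup m ℂ) (i j : m) :
    Φ (conjDiag V (Pi.single i 1 * Pi.single j 1))
      = Φ (conjDiag V (Pi.single i 1)) * Φ (conjDiag V (Pi.single j 1)) := by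
  have hE := isStarProjection_conjDiag_single V
  have htr : ∀ i, (conjDiag V (Pi.single i 1)).trace = 1 := fun i => by simp [trace_conjDiag]
  have hΦE : ∀ i, IsStarProjection (Φ (conjDiag V (Pi.single i 1))) := fun i =>
    ⟨hidem _ (hE i) (htr i), by
      rw [isSelfAdjoint_iff, ← hΦ.map_star, (hE i).isSelfAdjoint.star_eq]⟩
  obtain rfl | hij := eq_or_ne i j
  · rw [map_mul, (hE i).isIdempotentElem.eq, (hΦE i).isIdempotentElem.eq]
  · have hzero : (Pi.single i 1 * Pi.single j 1 : m → ℂ) = 0 :=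
      (CompleteOrthogonalIdempotents.single fun _ => ℂ).ortho hij
    rw [hzero, map_zero, map_zero, eq_comm, ← trace_conjTranspose_mul_self_eq_zero_iff,
      trace_conjTranspose_mul_self_of_isStarProjection (hΦE i) (hΦE j), hΦ.trace_map_mul_map,
      ← map_mul, hzero, map_zero, trace_zero]

lemma map_conjDiag_mul (V : unitaryGroup m ℂ) (d e : m → ℂ) :
    Φ (conjDiag V (d * e)) = Φ (conjDiag V d) * Φ (conjDiag V e) := by
  let L : (m → ℂ) →ₗ[ℂ] Matrix m m ℂ := Φ ∘ₗ (conjDiag V).toAlgHom.toLinearMap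
  have hL : (LinearMap.mul ℂ (m → ℂ)).compr₂ L = (LinearMap.mul ℂ (Matrix m m ℂ)).compl₁₂ L L :=
    (Pi.basisFun ℂ m).ext fun i => (Pi.basisFun ℂ m).ext fun j => by
      rw [Pi.basisFun_apply, Pi.basisFun_apply]
      exact hΦ.map_conjDiag_single_mul hidem V i j
  exact LinearMap.congr_fun₂ hL d e

lemma isJordanHom : IsJordanHom Φ.toAddMonoidHom := by
  have hsq : ∀ A : Matrix m m ℂ, IsSelfAdjoint A → Φ (A * A) = Φ A * Φ A := fun A hA => by
    obtain ⟨V, a, rfl⟩ := exists_conjDiag (show A.IsHermitian from hA)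
    rw [← map_mul, hΦ.map_conjDiag_mul hidem]
  let μ := LinearMap.mul ℂ (Matrix m m ℂ) + (LinearMap.mul ℂ (Matrix m m ℂ)).flip
  have hμ : μ.compr₂ Φ = μ.compl₁₂ Φ Φ :=
    LinearMap.ext_on span_selfAdjoint fun A hA => LinearMap.ext_on span_selfAdjoint fun B hB => by
      change Φ (A * B + B * A) = Φ A * Φ B + Φ B * Φ A
      have h := hsq (A + B) (IsSelfAdjoint.add hA hB)
      rw [show (A + B) * (A + B) = A * A + B * B + (A * B + B * A) by noncomm_ring, map_add Φ,
        map_add Φ (A * A), hsq A hA, hsq B hB, map_add Φ A] at h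
      linear_combination (norm := noncomm_ring) h
  exact ⟨fun A B => LinearMap.congr_fun₂ hμ A B⟩

theorem map_mul_or_map_mul :
    (∀ X Y, Φ (X * Y) = Φ X * Φ Y) ∨ ∀ X Y, Φ (X * Y) = Φ Y * Φ X :=
  (hΦ.isJordanHom hidem).map_mul_or_map_mul hΦ.surjective
    matrix_eq_zero_or_eq_zero_of_forall_mul_mul_eq_zero

end IsTraceIsometry

end JordanDichotomy

section Classification

variable {m : Type*} [Fintype m] [DecidableEq m]

lemma exists_eq_conjStarAlgAut_of_conj {A B : Type*} [Ring A] [StarRing A] [Algebra ℂ A]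
    [Ring B] [StarRing B] [Algebra ℂ B] (e : A ≃⋆ₐ[ℂ] B) (f : A ≃⋆ₐ[ℂ] A) (u : unitary B)
    (h : ∀ a, e (f a) = u * e a * star (u : B)) :
    ∃ w : unitary A, f = Unitary.conjStarAlgAut ℂ A w := by
  refine ⟨⟨e.symm u, Unitary.map_mem e.symm u.2⟩, StarAlgEquiv.ext fun a => ?_⟩
  rw [← e.symm_apply_apply (f a), h, map_mul, map_mul, e.symm_apply_apply, map_star]
  rfl

lemma exists_eq_conjStarAlgAut (f : Matrix m m ℂ ≃⋆ₐ[ℂ] Matrix m m ℂ) :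
    ∃ W : unitaryGroup m ℂ, f = Unitary.conjStarAlgAut ℂ (Matrix m m ℂ) W := by
  let e := toEuclideanCLM (n := m) (𝕜 := ℂ)
  let g := e.symm.trans (f.trans e)
  obtain ⟨U, hU⟩ := g.eq_linearIsometryEquivConjStarAlgEquiv
    (LinearMap.continuous_of_finiteDimensional g.toAlgEquiv.toLinearMap)
  rw [← Unitary.conjStarAlgAut_symm_unitaryLinearIsometryEquiv] at hU
  refine exists_eq_conjStarAlgAut_of_conj e f (Unitary.linearIsometryEquiv.symm U) fun X => ?_
  simpa [g] using DFunLike.congr_fun hU (e X)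

namespace IsTraceIsometry

variable {Φ : Matrix m m ℂ →ₗ[ℂ] Matrix m m ℂ} (hΦ : IsTraceIsometry Φ)
include hΦ

lemma exists_eq_unitary_conj (hmul : ∀ X Y, Φ (X * Y) = Φ X * Φ Y) :
    ∃ W ∈ unitaryGroup m ℂ, ∀ X, Φ X = W * X * Wᴴ := by
  let f : Matrix m m ℂ →⋆ₐ[ℂ] Matrix m m ℂ :=
    { AlgHom.ofLinearMap Φ hΦ.map_one hmul with map_star' := hΦ.map_star }
  obtain ⟨W, hW⟩ := exists_eq_conjStarAlgAut (StarAlgEquiv.ofBijective f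
    ⟨LinearMap.injective_iff_surjective.mpr hΦ.surjective, hΦ.surjective⟩)
  exact ⟨W, W.2, DFunLike.congr_fun hW⟩

lemma comp_transpose : IsTraceIsometry (Φ ∘ₗ (transposeLinearEquiv m m ℂ ℂ).toLinearMap) where
  map_one := by simp [hΦ.map_one]
  map_star X := by simp [← hΦ.map_star, star_eq_conjTranspose, conjTranspose, transpose_map]
  trace_map_mul_map X Y := by
    change (Φ Xᵀ * Φ Yᵀ).trace = (X * Y).trace
    rw [hΦ.trace_map_mul_map, ← transpose_mul, trace_transpose, trace_mul_comm]

theorem exists_eq_unitary_conj_or_transpose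
    (hidem : ∀ E, IsStarProjection E → E.trace = 1 → IsIdempotentElem (Φ E)) :
    ∃ W ∈ unitaryGroup m ℂ, (∀ X, Φ X = W * X * Wᴴ) ∨ ∀ X, Φ X = W * Xᵀ * Wᴴ := by
  rcases hΦ.map_mul_or_map_mul hidem with hmul | hmul
  · obtain ⟨W, hW, h⟩ := hΦ.exists_eq_unitary_conj hmul
    exact ⟨W, hW, Or.inl h⟩
  · obtain ⟨W, hW, h⟩ := hΦ.comp_transpose.exists_eq_unitary_conj fun X Y =>
      (congrArg Φ (transpose_mul X Y)).trans (hmul _ _)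
    exact ⟨W, hW, Or.inr fun X => h Xᵀ⟩

end IsTraceIsometry

end Classification

section Isometries

variable {m : Type*} [Fintype m] [DecidableEq m] {n : ℕ} {p : ℝ}

theorem exists_unitary_of_mem_isometryGroup (hm : Fintype.card m = 2 * n) (hn : n ≠ 0)
    (hp : 0 < p) {ψ : Equiv.Perm (Symm m 0)} (hψ : ψ ∈ isometryGroup m 0 p) :
    ∃ W ∈ unitaryGroup m ℂ,
      (∀ s, (ψ s).1 = W * s.1 * Wᴴ) ∨ (∀ s, (ψ s).1 = W * s.1ᵀ * Wᴴ) ∨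
      (∀ s, (ψ s).1 = -(W * s.1 * Wᴴ)) ∨ ∀ s, (ψ s).1 = -(W * s.1ᵀ * Wᴴ) := by
  obtain ⟨Φ, hΦ, hs⟩ := exists_isTraceIsometry hm fun s t => trace_map_mul_map hp hψ t s
  have hcompl : ∀ s, (ψ s).1 = -complement n Φ s.1 := fun s => by
    rw [complement_apply, s.2.2, mul_zero, zero_smul, zero_sub, neg_neg, hs]
  rcases hΦ.forall_isIdempotentElem_map_or_complement hm hn hs with h | h
  · obtain ⟨W, hW, h | h⟩ := hΦ.exists_eq_unitary_conj_or_transpose h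
    · exact ⟨W, hW, Or.inl fun s => (hs s).symm.trans (h s.1)⟩
    · exact ⟨W, hW, Or.inr <| Or.inl fun s => (hs s).symm.trans (h s.1)⟩
  · obtain ⟨W, hW, h | h⟩ :=
      (isTraceIsometry_complement hm hn hΦ).exists_eq_unitary_conj_or_transpose h
    · exact ⟨W, hW, Or.inr <| Or.inr <| Or.inl fun s => h s.1 ▸ hcompl s⟩
    · exact ⟨W, hW, Or.inr <| Or.inr <| Or.inr fun s => h s.1 ▸ hcompl s⟩

lemma lpnorm_eq_lpnorm_iff [Nonempty m] (hp : 0 < p) {A B : Matrix m m ℂ} :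
    lpnorm p A = lpnorm p B ↔ schattenPow p A = schattenPow p B := by
  change (schattenPow p A / Fintype.card m) ^ (1 / p) = (schattenPow p B / Fintype.card m) ^ (1 / p)
    ↔ _
  rw [Real.rpow_left_inj (div_nonneg (schattenPow_nonneg A) (Nat.cast_nonneg _))
    (div_nonneg (schattenPow_nonneg B) (Nat.cast_nonneg _)) (one_div_pos.mpr hp).ne',
    div_left_inj' (Nat.cast_ne_zero.mpr Fintype.card_ne_zero)]

variable (m n) in
/-- The projections of trace `n`; for `|m| = 2n` these are the projections of normalized trace
`1/2`. -/
abbrev TraceProj := {P : Matrix m m ℂ // IsStarProjection P ∧ P.trace = n}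

/-- The bijection `P ↦ 2P - 1` between the projections of normalized trace `1/2` and the symmetries
of trace zero. -/
noncomputable def traceProjEquivSymm (hm : Fintype.card m = 2 * n) :
    TraceProj m n ≃ Symm m 0 where
  toFun P := ⟨(2 : ℂ) • P.1 - 1, isSymmetry_two_smul_sub_one P.2.1, by simp [P.2.2, hm]⟩
  invFun s := ⟨(2⁻¹ : ℂ) • (1 + s.1), s.2.1.isStarProjection, by simp [s.2.2, hm]⟩
  left_inv P := Subtype.ext (by simp)
  right_inv s := Subtype.ext (by simp)

lemma coe_traceProjEquivSymm (hm : Fintype.card m = 2 * n) (P : TraceProj m n) :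
    (traceProjEquivSymm hm P).1 = (2 : ℂ) • P.1 - 1 := rfl

lemma schattenPow_traceProjEquivSymm_sub (hm : Fintype.card m = 2 * n)
    (P Q : TraceProj m n) :
    schattenPow p ((traceProjEquivSymm hm P).1 - (traceProjEquivSymm hm Q).1)
      = ‖(2 : ℂ)‖ ^ p * schattenPow p (P.1 - Q.1) := by
  rw [coe_traceProjEquivSymm, coe_traceProjEquivSymm, sub_sub_sub_cancel_right, ← smul_sub,
    schattenPow_smul]

lemma injective_of_schattenPow_sub_eq (hp : 0 < p) {φ : TraceProj m n → TraceProj m n}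
    (hφ : ∀ P Q, schattenPow p ((φ P).1 - (φ Q).1) = schattenPow p (P.1 - Q.1)) :
    Function.Injective φ := fun P Q h => by
  rw [Subtype.ext_iff, ← sub_eq_zero, ← schattenPow_eq_zero_iff hp, ← hφ,
    schattenPow_eq_zero_iff hp, h, sub_self]

theorem exists_unitary_of_surjective_of_schattenPow_sub_eq (hm : Fintype.card m = 2 * n)
    (hn : n ≠ 0) (hp : 0 < p) {φ : TraceProj m n → TraceProj m n} (hsurj : Function.Surjective φ)
    (hφ : ∀ P Q, schattenPow p ((φ P).1 - (φ Q).1) = schattenPow p (P.1 - Q.1)) :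
    ∃ W ∈ unitaryGroup m ℂ,
      (∀ P, (φ P).1 = W * P.1 * Wᴴ) ∨ (∀ P, (φ P).1 = W * P.1ᵀ * Wᴴ) ∨
      (∀ P, (φ P).1 = 1 - W * P.1 * Wᴴ) ∨ ∀ P, (φ P).1 = 1 - W * P.1ᵀ * Wᴴ := by
  let e := traceProjEquivSymm hm
  have hbij : Function.Bijective φ := ⟨injective_of_schattenPow_sub_eq hp hφ, hsurj⟩
  let ψ := e.permCongr (Equiv.ofBijective φ hbij)
  have he : ∀ P, ψ (e P) = e (φ P) := fun P => by
    rw [Equiv.permCongr_apply, e.symm_apply_apply, Equiv.ofBijective_apply]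
  have hψ : ψ ∈ isometryGroup m 0 p :=
    e.forall_congr_right.mp fun P => e.forall_congr_right.mp fun Q => by
      rw [he, he, schattenPow_traceProjEquivSymm_sub hm, hφ,
        schattenPow_traceProjEquivSymm_sub hm]
  obtain ⟨W, hW, h⟩ := exists_unitary_of_mem_isometryGroup hm hn hp hψ
  have hWW : W * Wᴴ = 1 := mem_unitaryGroup_iff.mp hW
  have hconj : ∀ P : Matrix m m ℂ, W * ((2 : ℂ) • P - 1) * Wᴴ = (2 : ℂ) • (W * P * Wᴴ) - 1 :=
    fun P => by rw [mul_sub, sub_mul, Matrix.mul_one, hWW, mul_smul_comm, smul_mul_assoc]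
  have htr : ∀ P : TraceProj m n, ((e P).1)ᵀ = (2 : ℂ) • P.1ᵀ - 1 := fun P => by
    rw [coe_traceProjEquivSymm, transpose_sub, transpose_smul, transpose_one]
  refine ⟨W, hW, h.imp (fun h P => ?_) <| Or.imp (fun h P => ?_) <|
    Or.imp (fun h P => ?_) fun h P => ?_⟩
  all_goals
    have h := h (e P)
    rw [he, coe_traceProjEquivSymm] at h
  · rw [coe_traceProjEquivSymm, hconj] at h
    linear_combination (norm := module) (2⁻¹ : ℂ) • h
  · rw [htr, hconj] at h
    linear_combination (norm := module) (2⁻¹ : ℂ) • h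
  · rw [coe_traceProjEquivSymm, hconj] at h
    linear_combination (norm := module) (2⁻¹ : ℂ) • h
  · rw [htr, hconj] at h
    linear_combination (norm := module) (2⁻¹ : ℂ) • h

end Isometries

end GrassmannIsometry

/-- Every surjective `L^p`-isometry of the set of trace-`1/2` projections of
`M_{2n}(ℂ)` is of the form `P ↦ φ'(P)` or `P ↦ I − φ'(P)`, where `φ'` is a
*-automorphism (`P ↦ WPWᴴ`) or a *-anti-automorphism (`P ↦ WPᵀWᴴ`). -/
theorem stmt17 (n : ℕ) (hn : 1 ≤ n) (p : ℝ) (hp : 0 < p)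
    (φ : Matrix (Fin (2 * n)) (Fin (2 * n)) ℂ → Matrix (Fin (2 * n)) (Fin (2 * n)) ℂ)
    (hmem : ∀ P : Matrix (Fin (2 * n)) (Fin (2 * n)) ℂ,
      Pᴴ = P → P * P = P → P.trace = (n : ℂ) →
      (φ P)ᴴ = φ P ∧ φ P * φ P = φ P ∧ (φ P).trace = (n : ℂ))
    (hsurj : ∀ Q : Matrix (Fin (2 * n)) (Fin (2 * n)) ℂ,
      Qᴴ = Q → Q * Q = Q → Q.trace = (n : ℂ) →
      ∃ P : Matrix (Fin (2 * n)) (Fin (2 * n)) ℂ,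
        Pᴴ = P ∧ P * P = P ∧ P.trace = (n : ℂ) ∧ φ P = Q)
    (hiso : ∀ P Q : Matrix (Fin (2 * n)) (Fin (2 * n)) ℂ,
      Pᴴ = P → P * P = P → P.trace = (n : ℂ) →
      Qᴴ = Q → Q * Q = Q → Q.trace = (n : ℂ) →
      lpnorm p (φ P - φ Q) = lpnorm p (P - Q)) :
    ∃ W ∈ Matrix.unitaryGroup (Fin (2 * n)) ℂ,
      (∀ P : Matrix (Fin (2 * n)) (Fin (2 * n)) ℂ,
        Pᴴ = P → P * P = P → P.trace = (n : ℂ) → φ P = W * P * Wᴴ) ∨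
      (∀ P : Matrix (Fin (2 * n)) (Fin (2 * n)) ℂ,
        Pᴴ = P → P * P = P → P.trace = (n : ℂ) → φ P = W * Pᵀ * Wᴴ) ∨
      (∀ P : Matrix (Fin (2 * n)) (Fin (2 * n)) ℂ,
        Pᴴ = P → P * P = P → P.trace = (n : ℂ) → φ P = 1 - W * P * Wᴴ) ∨
      (∀ P : Matrix (Fin (2 * n)) (Fin (2 * n)) ℂ,
        Pᴴ = P → P * P = P → P.trace = (n : ℂ) → φ P = 1 - W * Pᵀ * Wᴴ) := by
  let f (P : GrassmannIsometry.TraceProj (Fin (2 * n)) n) :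
      GrassmannIsometry.TraceProj (Fin (2 * n)) n :=
    have h := hmem P.1 P.2.1.isSelfAdjoint P.2.1.isIdempotentElem P.2.2
    ⟨φ P.1, ⟨h.2.1, h.1⟩, h.2.2⟩
  have : NeZero (2 * n) := ⟨by lia⟩
  have hf : Function.Surjective f := fun Q => by
    obtain ⟨P, hP, hPP, htr, hPQ⟩ := hsurj Q.1 Q.2.1.isSelfAdjoint Q.2.1.isIdempotentElem Q.2.2
    have hproj : IsStarProjection P := ⟨hPP, hP⟩
    exact ⟨⟨P, hproj, htr⟩, Subtype.ext hPQ⟩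
  have hfiso (P Q) : lpnorm p ((f P).1 - (f Q).1) = lpnorm p (P.1 - Q.1) :=
    hiso P.1 Q.1 P.2.1.isSelfAdjoint P.2.1.isIdempotentElem P.2.2
      Q.2.1.isSelfAdjoint Q.2.1.isIdempotentElem Q.2.2
  obtain ⟨W, hW, h⟩ := GrassmannIsometry.exists_unitary_of_surjective_of_schattenPow_sub_eq
    (Fintype.card_fin _) (by lia) hp hf fun P Q =>
      (GrassmannIsometry.lpnorm_eq_lpnorm_iff hp).mp (hfiso P Q)
  have hsub {F : Matrix (Fin (2 * n)) (Fin (2 * n)) ℂ → Matrix (Fin (2 * n)) (Fin (2 * n)) ℂ}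
      (hF : ∀ P, (f P).1 = F P.1) (P : Matrix (Fin (2 * n)) (Fin (2 * n)) ℂ) (hP : Pᴴ = P)
      (hPP : P * P = P) (htr : P.trace = n) : φ P = F P := by
    have hproj : IsStarProjection P := ⟨hPP, hP⟩
    exact hF ⟨P, hproj, htr⟩
  exact ⟨W, hW, h.imp hsub <| Or.imp hsub <| Or.imp hsub hsub⟩
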